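/- Let N ≥ 9. Then the extremal solution u* of (P)_λ on the unit ball satisfies u*(x) ≤ 1 − |x|^{4/3} for all x ∈ B. -/

import Mathlib

open MeasureTheory Metric Set Filter

/-- The Laplacian of `u : ℝ^N → ℝ`, as the sum of pure second partial derivatives. -/
noncomputable def lap {N : ℕ} (u : EuclideanSpace ℝ (Fin N) → ℝ) (x : EuclideanSpace ℝ (Fin N)) : ℝ :=
  ∑ i : Fin N, fderiv ℝ (fun y => fderiv ℝ u y (EuclideanSpace.single i 1)) x
    (EuclideanSpace.single i 1)

/-- The biharmonic operator `Δ²`. -/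
noncomputable def biharm {N : ℕ} (u : EuclideanSpace ℝ (Fin N) → ℝ)
    (x : EuclideanSpace ℝ (Fin N)) : ℝ :=
  lap (lap u) x

/-- A classical solution of `(P)_λ` on the unit ball `B ⊆ ℝ^N`:
`u ∈ C⁴(B̄)`, `0 < u < 1` in `B`, `Δ²u = λ (1-u)⁻²` in `B`, and `u = 0`, `∂_ν u = 0` on `∂B`. -/
structure IsClassicalSolution (N : ℕ) (lam : ℝ) (u : EuclideanSpace ℝ (Fin N) → ℝ) : Prop where
  contDiffOn : ContDiffOn ℝ 4 u (closedBall (0 : EuclideanSpace ℝ (Fin N)) 1)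
  pos : ∀ x ∈ ball (0 : EuclideanSpace ℝ (Fin N)) 1, 0 < u x
  lt_one : ∀ x ∈ ball (0 : EuclideanSpace ℝ (Fin N)) 1, u x < 1
  eqn : ∀ x ∈ ball (0 : EuclideanSpace ℝ (Fin N)) 1, biharm u x = lam / (1 - u x) ^ 2
  bdry : ∀ x : EuclideanSpace ℝ (Fin N), ‖x‖ = 1 → u x = 0
  bdry_deriv : ∀ x : EuclideanSpace ℝ (Fin N), ‖x‖ = 1 →
    fderivWithin ℝ u (closedBall (0 : EuclideanSpace ℝ (Fin N)) 1) x x = 0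

/-- The set of voltages `λ > 0` for which `(P)_λ` admits a classical solution;
the pull-in voltage `λ*` is its supremum. -/
def solSet (N : ℕ) : Set ℝ := {lam | 0 < lam ∧ ∃ u, IsClassicalSolution N lam u}

/-- `λ̄_N = (8/9)(N - 2/3)(N - 8/3)`. -/
noncomputable def lamBar (N : ℕ) : ℝ := (8 / 9) * ((N : ℝ) - 2 / 3) * ((N : ℝ) - 8 / 3)

/-- linear radial system in the variable `ρ = |x|^2`. -/
structure RadSys (M : ℝ) (s : Set ℝ) (f f1 g g1 e : ℝ → ℝ) : Prop where
  d0 : ∀ r ∈ s, HasDerivAt f (f1 r) r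
  d1 : ∀ r ∈ s, HasDerivAt f1 ((g r - 2 * M * f1 r) / (4 * r)) r
  d2 : ∀ r ∈ s, HasDerivAt g (g1 r) r
  d3 : ∀ r ∈ s, HasDerivAt g1 ((e r - 2 * M * g1 r) / (4 * r)) r

lemma RadSys.add {M : ℝ} {s : Set ℝ} {f f1 g g1 e f' f1' g' g1' e' : ℝ → ℝ}
    (h : RadSys M s f f1 g g1 e) (h' : RadSys M s f' f1' g' g1' e') :
    RadSys M s (fun r => f r + f' r) (fun r => f1 r + f1' r) (fun r => g r + g' r)
      (fun r => g1 r + g1' r) (fun r => e r + e' r) where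
  d0 r hr := (h.d0 r hr).add (h'.d0 r hr)
  d1 r hr := by
    refine HasDerivAt.congr_deriv ((h.d1 r hr).add (h'.d1 r hr)) ?_
    ring
  d2 r hr := (h.d2 r hr).add (h'.d2 r hr)
  d3 r hr := by
    refine HasDerivAt.congr_deriv ((h.d3 r hr).add (h'.d3 r hr)) ?_
    ring

lemma RadSys.smul {M : ℝ} {s : Set ℝ} {f f1 g g1 e : ℝ → ℝ} (c : ℝ)
    (h : RadSys M s f f1 g g1 e) :
    RadSys M s (fun r => c * f r) (fun r => c * f1 r) (fun r => c * g r)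
      (fun r => c * g1 r) (fun r => c * e r) where
  d0 r hr := (h.d0 r hr).const_mul c
  d1 r hr := by
    refine HasDerivAt.congr_deriv ((h.d1 r hr).const_mul c) ?_
    ring
  d2 r hr := (h.d2 r hr).const_mul c
  d3 r hr := by
    refine HasDerivAt.congr_deriv ((h.d3 r hr).const_mul c) ?_
    ring

lemma RadSys.mono {M : ℝ} {s t : Set ℝ} {f f1 g g1 e : ℝ → ℝ} (hts : t ⊆ s)
    (h : RadSys M s f f1 g g1 e) : RadSys M t f f1 g g1 e :=
  ⟨fun r hr => h.d0 r (hts hr), fun r hr => h.d1 r (hts hr), fun r hr => h.d2 r (hts hr),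
    fun r hr => h.d3 r (hts hr)⟩

/-- symbol -/
noncomputable def rmu (M a : ℝ) : ℝ := 2 * a * (2 * a + M - 2)

lemma RadSys.monomial (M a : ℝ) : RadSys M (Ioi 0) (fun r => r ^ a) (fun r => a * r ^ (a - 1))
    (fun r => rmu M a * r ^ (a - 1)) (fun r => rmu M a * ((a - 1) * r ^ (a - 2)))
    (fun r => rmu M a * rmu M (a - 1) * r ^ (a - 2)) where
  d0 r hr := Real.hasDerivAt_rpow_const (Or.inl (ne_of_gt hr))
  d1 r hr := by
    have hr' : (0:ℝ) < r := hr
    refine HasDerivAt.congr_deriv ((Real.hasDerivAt_rpow_const (x := r) (p := a - 1) (Or.inl hr'.ne')).const_mul a) ?_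
    have : r ^ (a - 1 - 1) = r ^ (a - 1) / r := by rw [Real.rpow_sub_one hr'.ne']
    rw [this]; unfold rmu; field_simp; ring
  d2 r hr := by
    have hr' : (0:ℝ) < r := hr
    refine HasDerivAt.congr_deriv ((Real.hasDerivAt_rpow_const (x := r) (p := a - 1) (Or.inl hr'.ne')).const_mul (rmu M a)) ?_
    rw [show a - 1 - 1 = a - 2 by ring]
  d3 r hr := by
    have hr' : (0:ℝ) < r := hr
    refine HasDerivAt.congr_deriv (((Real.hasDerivAt_rpow_const (x := r) (p := a - 2) (Or.inl hr'.ne')).const_mul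
      (a - 1)).const_mul (rmu M a)) ?_
    have : r ^ (a - 2 - 1) = r ^ (a - 2) / r := by rw [Real.rpow_sub_one hr'.ne']
    rw [this]; unfold rmu; field_simp; ring

lemma RadSys.flux {M r : ℝ} (hr : 0 < r) {f1 g : ℝ → ℝ}
    (h : HasDerivAt f1 ((g r - 2 * M * f1 r) / (4 * r)) r) :
    HasDerivAt (fun r => r ^ (M / 2) * f1 r) (r ^ (M / 2 - 1) / 4 * g r) r := by
  refine HasDerivAt.congr_deriv ((Real.hasDerivAt_rpow_const (x := r) (p := M / 2) (Or.inl hr.ne')).mul h) ?_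
  have : r ^ (M / 2 - 1) = r ^ (M / 2) / r := by rw [Real.rpow_sub_one hr.ne']
  rw [this]; field_simp; ring

lemma RadSys.wronskian {M : ℝ} {s : Set ℝ} (hs : s ⊆ Ioi 0) {f f1 g g1 e φ φ1 γ γ1 ε : ℝ → ℝ}
    (h : RadSys M s f f1 g g1 e) (h' : RadSys M s φ φ1 γ γ1 ε) (r : ℝ) (hr : r ∈ s) :
    HasDerivAt (fun r => φ r * (r ^ (M / 2) * g1 r) - g r * (r ^ (M / 2) * φ1 r)
      + γ r * (r ^ (M / 2) * f1 r) - f r * (r ^ (M / 2) * γ1 r))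
      (r ^ (M / 2 - 1) / 4 * (φ r * e r - f r * ε r)) r := by
  have hr0 : 0 < r := hs hr
  refine HasDerivAt.congr_deriv (((((h'.d0 r hr).mul (RadSys.flux hr0 (h.d3 r hr))).sub
    ((h.d2 r hr).mul (RadSys.flux hr0 (h'.d1 r hr)))).add
    ((h'.d2 r hr).mul (RadSys.flux hr0 (h.d1 r hr)))).sub
    ((h.d0 r hr).mul (RadSys.flux hr0 (h'.d3 r hr)))) ?_
  ring

/-- order of growth at zero -/
def OZ (a : ℝ) (f : ℝ → ℝ) : Prop := f =O[nhdsWithin 0 (Ioi 0)] fun r => r ^ a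

lemma OZ.mul {a b : ℝ} {f g : ℝ → ℝ} (hf : OZ a f) (hg : OZ b g) :
    OZ (a + b) (fun r => f r * g r) := by
  refine (Asymptotics.IsBigO.mul hf hg).congr' (EventuallyEq.refl _ _) ?_
  filter_upwards [self_mem_nhdsWithin] with r hr
  rw [Real.rpow_add hr]

lemma OZ.add {a : ℝ} {f g : ℝ → ℝ} (hf : OZ a f) (hg : OZ a g) :
    OZ a (fun r => f r + g r) := Asymptotics.IsBigO.add hf hg

lemma OZ.sub {a : ℝ} {f g : ℝ → ℝ} (hf : OZ a f) (hg : OZ a g) :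
    OZ a (fun r => f r - g r) := Asymptotics.IsBigO.sub hf hg

lemma OZ.const_mul {a : ℝ} {f : ℝ → ℝ} (c : ℝ) (hf : OZ a f) :
    OZ a (fun r => c * f r) := Asymptotics.IsBigO.const_mul_left hf c

lemma OZ.rpow (a : ℝ) : OZ a (fun r => r ^ a) := Asymptotics.isBigO_refl _ _

lemma OZ.mono {a b : ℝ} {f : ℝ → ℝ} (hab : b ≤ a) (hf : OZ a f) : OZ b f := by
  refine Asymptotics.IsBigO.trans hf ?_
  refine Asymptotics.IsBigO.of_bound 1 ?_
  filter_upwards [Ioo_mem_nhdsGT (zero_lt_one' ℝ)] with r hr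
  rw [Real.norm_of_nonneg (Real.rpow_nonneg hr.1.le _),
    Real.norm_of_nonneg (Real.rpow_nonneg hr.1.le _), one_mul]
  exact Real.rpow_le_rpow_of_exponent_ge hr.1 hr.2.le hab

lemma OZ.tendsto {a : ℝ} {f : ℝ → ℝ} (ha : 0 < a) (hf : OZ a f) :
    Tendsto f (nhdsWithin 0 (Ioi 0)) (nhds 0) := by
  refine Asymptotics.IsBigO.trans_tendsto hf ?_
  have : ContinuousAt (fun r : ℝ => r ^ a) 0 := Real.continuousAt_rpow_const 0 a (Or.inr ha.le)
  have h2 := this.tendsto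
  simp only [Real.zero_rpow ha.ne'] at h2
  exact h2.mono_left nhdsWithin_le_nhds

lemma pos_of_incr {f f' : ℝ → ℝ} {r : ℝ} (hr : 0 < r)
    (hd : ∀ s ∈ Ioc 0 r, HasDerivAt f (f' s) s) (hp : ∀ s ∈ Ioo 0 r, 0 < f' s)
    (ht : Tendsto f (nhdsWithin 0 (Ioi 0)) (nhds 0)) : 0 < f r := by
  have hmono : StrictMonoOn f (Ioc 0 r) := by
    apply strictMonoOn_of_deriv_pos (convex_Ioc 0 r)
    · exact fun s hs => (hd s hs).continuousAt.continuousWithinAt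
    · intro s hs
      rw [interior_Ioc] at hs
      rw [(hd s ⟨hs.1, hs.2.le⟩).deriv]; exact hp s hs
  have h1 : f (r / 2) < f r := hmono ⟨by linarith, by linarith⟩ ⟨hr, le_rfl⟩ (by linarith)
  have h2 : 0 ≤ f (r / 2) := by
    refine le_of_tendsto ht ?_
    filter_upwards [Ioo_mem_nhdsGT (show (0:ℝ) < r / 2 by linarith)] with s hs
    exact (hmono ⟨hs.1, by linarith [hs.2]⟩ ⟨by linarith, by linarith⟩ hs.2).le
  linarith

lemma neg_of_decr {f f' : ℝ → ℝ} {r : ℝ} (hr : 0 < r)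
    (hd : ∀ s ∈ Ioc 0 r, HasDerivAt f (f' s) s) (hp : ∀ s ∈ Ioo 0 r, f' s < 0)
    (ht : Tendsto f (nhdsWithin 0 (Ioi 0)) (nhds 0)) : f r < 0 := by
  have := pos_of_incr (f := fun s => - f s) (f' := fun s => - f' s) hr (fun s hs => (hd s hs).neg)
    (fun s hs => by linarith [hp s hs]) (by simpa using ht.neg)
  simpa using this

/-- first point where a function becomes nonneg -/
lemma first_nonneg {k : ℝ → ℝ} {a b : ℝ} (hab : a < b) (hc : ContinuousOn k (Icc a b))
    (ha : k a < 0) (hb : 0 ≤ k b) :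
    ∃ c, a < c ∧ c ≤ b ∧ k c = 0 ∧ ∀ s, a ≤ s → s < c → k s < 0 := by
  obtain ⟨c, hc1, hc2⟩ : ∃ c ∈ Icc a b ∩ k ⁻¹' (Ici 0), IsLeast (Icc a b ∩ k ⁻¹' (Ici 0)) c := by
    have hcl : IsClosed (Icc a b ∩ k ⁻¹' (Ici 0)) := hc.preimage_isClosed_of_isClosed isClosed_Icc isClosed_Ici
    have hcomp : IsCompact (Icc a b ∩ k ⁻¹' (Ici 0)) :=
      isCompact_Icc.of_isClosed_subset hcl inter_subset_left
    obtain ⟨c, hc⟩ := hcomp.exists_isLeast ⟨b, ⟨hab.le, le_rfl⟩, hb⟩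
    exact ⟨c, hc.1, hc⟩
  have hck : 0 ≤ k c := hc1.2
  have hac : a < c := by
    rcases eq_or_lt_of_le hc1.1.1 with h | h
    · rw [← h] at hck; linarith
    · exact h
  have hlt : ∀ s, a ≤ s → s < c → k s < 0 := by
    intro s hs hsc
    by_contra hcon
    have := hc2.2 ⟨⟨hs, hsc.le.trans hc1.1.2⟩, not_lt.mp hcon⟩
    linarith
  refine ⟨c, hac, hc1.1.2, le_antisymm ?_ hck, hlt⟩
  have ht : Tendsto k (nhdsWithin c (Ioo a c)) (nhds (k c)) :=
    ((hc c hc1.1).mono (fun s hs => ⟨hs.1.le, hs.2.le.trans hc1.1.2⟩)).tendsto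
  have : (nhdsWithin c (Ioo a c)).NeBot := by
    rw [nhdsWithin_Ioo_eq_nhdsLT hac]; infer_instance
  refine le_of_tendsto ht ?_
  filter_upwards [self_mem_nhdsWithin] with s hs
  exact (hlt s hs.1.le hs.2).le

lemma cube_aux {A y F L l : ℝ} (hA : 0 < A) (hy : 0 < y) (hF : A * y < F) (hL : 0 < L)
    (hl : A ^ 3 * L ≤ l) : -(l / F ^ 2) + A * L / y ^ 2 ≤ 2 * L / y ^ 3 * (F - A * y) := by
  have hF0 : 0 < F := lt_trans (by positivity) hF
  have h1 : A ^ 3 * L / F ^ 2 ≤ l / F ^ 2 := by gcongr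
  have h2 : 2 * L / y ^ 3 * (F - A * y) - (-(A ^ 3 * L / F ^ 2) + A * L / y ^ 2)
      = L * ((F - A * y) ^ 2 * (2 * F + A * y)) / (y ^ 3 * F ^ 2) := by
    field_simp; ring
  have h3 : 0 ≤ L * ((F - A * y) ^ 2 * (2 * F + A * y)) / (y ^ 3 * F ^ 2) := by positivity
  linarith

lemma rpow_23 {r : ℝ} (hr : 0 < r) : (r ^ ((2:ℝ)/3)) ^ 3 = r ^ 2 ∧
    r ^ ((2:ℝ)/3 - 2) = 1 / (r ^ ((2:ℝ)/3)) ^ 2 := by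
  have h : (r ^ ((2:ℝ)/3)) ^ 3 = r ^ 2 := by
    rw [← Real.rpow_natCast, ← Real.rpow_mul hr.le]; norm_num
  refine ⟨h, ?_⟩
  have : r ^ ((2:ℝ)/3 - 2) = r ^ ((2:ℝ)/3) / r ^ 2 := by
    rw [Real.rpow_sub hr]; norm_num
  rw [this, ← h]
  have : 0 < r ^ ((2:ℝ)/3) := Real.rpow_pos_of_pos hr _
  field_simp

/-- `λ̄` -/
noncomputable def lB (M : ℝ) : ℝ := 8 / 9 * (M - 2 / 3) * (M - 8 / 3)

lemma lB_eq (M : ℝ) : rmu M (2/3) * rmu M (2/3 - 1) = - lB M := by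
  unfold rmu lB; ring

lemma OZ_const (c : ℝ) : OZ 0 (fun _ => c) := by
  have := (OZ.rpow 0).const_mul c
  simpa using this

/-- the test function system -/
lemma test_sys (M k : ℝ) : RadSys M (Ioi 0)
    (fun r => r ^ (-(M-4)/4) + ((-2 * k) * r ^ (1:ℝ) + k ^ 2 * r ^ ((M+4)/4)))
    (fun r => (-(M-4)/4) * r ^ (-(M-4)/4 - 1) + ((-2 * k) * (1 * r ^ ((1:ℝ) - 1)) +
      k ^ 2 * ((M+4)/4 * r ^ ((M+4)/4 - 1))))
    (fun r => rmu M (-(M-4)/4) * r ^ (-(M-4)/4 - 1) + ((-2 * k) * (rmu M 1 * r ^ ((1:ℝ) - 1)) +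
      k ^ 2 * (rmu M ((M+4)/4) * r ^ ((M+4)/4 - 1))))
    (fun r => rmu M (-(M-4)/4) * ((-(M-4)/4 - 1) * r ^ (-(M-4)/4 - 2)) +
      ((-2 * k) * (rmu M 1 * ((1 - 1) * r ^ ((1:ℝ) - 2))) +
      k ^ 2 * (rmu M ((M+4)/4) * (((M+4)/4 - 1) * r ^ ((M+4)/4 - 2)))))
    (fun r => rmu M (-(M-4)/4) * rmu M (-(M-4)/4 - 1) * r ^ (-(M-4)/4 - 2) +
      ((-2 * k) * (rmu M 1 * rmu M (1 - 1) * r ^ ((1:ℝ) - 2)) +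
      k ^ 2 * (rmu M ((M+4)/4) * rmu M ((M+4)/4 - 1) * r ^ ((M+4)/4 - 2)))) :=
  (RadSys.monomial M _).add (((RadSys.monomial M 1).smul (-2 * k)).add
    ((RadSys.monomial M ((M+4)/4)).smul (k ^ 2)))

/-- difference system -/
lemma diff_sys {M A : ℝ} {F p D q e : ℝ → ℝ} (hS : RadSys M (Ioo 0 1) F p D q e) :
    RadSys M (Ioo 0 1) (fun r => F r + (-A) * r ^ ((2:ℝ)/3))
      (fun r => p r + (-A) * ((2:ℝ)/3 * r ^ ((2:ℝ)/3 - 1)))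
      (fun r => D r + (-A) * (rmu M (2/3) * r ^ ((2:ℝ)/3 - 1)))
      (fun r => q r + (-A) * (rmu M (2/3) * (((2:ℝ)/3 - 1) * r ^ ((2:ℝ)/3 - 2))))
      (fun r => e r + (-A) * (rmu M (2/3) * rmu M (2/3 - 1) * r ^ ((2:ℝ)/3 - 2))) :=
  hS.add (((RadSys.monomial M (2/3)).smul (-A)).mono (fun r hr => hr.1))

lemma eps_pos {M k r : ℝ} (hM : 9 ≤ M) (hk : 0 < k) (hr : 0 < r) :
    2 * lB M / r ^ 2 * (r ^ (-(M-4)/4) + ((-2 * k) * r ^ (1:ℝ) + k ^ 2 * r ^ ((M+4)/4))) <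
    rmu M (-(M-4)/4) * rmu M (-(M-4)/4 - 1) * r ^ (-(M-4)/4 - 2) +
      ((-2 * k) * (rmu M 1 * rmu M (1 - 1) * r ^ ((1:ℝ) - 2)) +
      k ^ 2 * (rmu M ((M+4)/4) * rmu M ((M+4)/4 - 1) * r ^ ((M+4)/4 - 2))) := by
  have e1 : r ^ (-(M-4)/4 - 2) = r ^ (-(M-4)/4) / r ^ 2 := by
    rw [Real.rpow_sub hr]; norm_num
  have e2 : r ^ ((M+4)/4 - 2) = r ^ ((M+4)/4) / r ^ 2 := by
    rw [Real.rpow_sub hr]; norm_num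
  have p1 : 0 < r ^ (-(M-4)/4) := Real.rpow_pos_of_pos hr _
  have p2 : 0 < r ^ ((M+4)/4) := Real.rpow_pos_of_pos hr _
  rw [e1, e2, Real.rpow_one]
  set X := r ^ (-(M-4)/4)
  set Y := r ^ ((M+4)/4)
  have m0 : rmu M (1 - 1) = 0 := by unfold rmu; ring
  have m1 : rmu M (-(M-4)/4) * rmu M (-(M-4)/4 - 1) = M^2*(M-4)^2/16 := by unfold rmu; ring
  have m2 : rmu M ((M+4)/4) * rmu M ((M+4)/4 - 1) = (M/2+2)*(3*M/2)*(M/2)*(3*M/2-2) := by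
    unfold rmu; ring
  rw [m0, m1, m2]
  have hl : 0 < lB M := by
    unfold lB
    have : 0 < M - 2/3 := by linarith
    have : 0 < M - 8/3 := by linarith
    positivity
  have c1 : 2 * lB M < M^2*(M-4)^2/16 := by
    unfold lB
    obtain ⟨t, rfl⟩ : ∃ t, M = 9 + t := ⟨M - 9, by ring⟩
    have ht : 0 ≤ t := by linarith
    have : 0 ≤ t^2 := by positivity
    have : 0 ≤ t^3 := by positivity
    have : 0 ≤ t^4 := by positivity
    nlinarith
  have c2 : 2 * lB M < (M/2+2)*(3*M/2)*(M/2)*(3*M/2-2) := by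
    unfold lB
    obtain ⟨t, rfl⟩ : ∃ t, M = 9 + t := ⟨M - 9, by ring⟩
    have ht : 0 ≤ t := by linarith
    have : 0 ≤ t^2 := by positivity
    have : 0 ≤ t^3 := by positivity
    have : 0 ≤ t^4 := by positivity
    nlinarith
  rw [← sub_pos]
  have : (M^2*(M-4)^2/16 * (X / r^2) + ((-2 * k) * (rmu M 1 * 0 * r ^ ((1:ℝ) - 2)) +
      k ^ 2 * ((M/2+2)*(3*M/2)*(M/2)*(3*M/2-2) * (Y / r^2)))) -
      2 * lB M / r ^ 2 * (X + ((-2 * k) * r + k ^ 2 * Y))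
      = (M^2*(M-4)^2/16 - 2 * lB M) * (X / r^2) + 4 * lB M * k * (r / r^2) +
        k^2 * (((M/2+2)*(3*M/2)*(M/2)*(3*M/2-2) - 2 * lB M) * (Y / r^2)) := by ring
  rw [this]
  have d1 : 0 < M^2*(M-4)^2/16 - 2 * lB M := by linarith
  have d2 : 0 < (M/2+2)*(3*M/2)*(M/2)*(3*M/2-2) - 2 * lB M := by linarith
  positivity

lemma phi_nonneg {M k r : ℝ} (hr : 0 < r) :
    0 ≤ r ^ (-(M-4)/4) + ((-2 * k) * r ^ (1:ℝ) + k ^ 2 * r ^ ((M+4)/4)) := by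
  have e1 : r ^ (1:ℝ) = r ^ (-(M-4)/4) * r ^ (M/4) := by
    rw [← Real.rpow_add hr]; congr 1; ring
  have e2 : r ^ ((M+4)/4) = r ^ (-(M-4)/4) * (r ^ (M/4) * r ^ (M/4)) := by
    rw [← Real.rpow_add hr, ← Real.rpow_add hr]; congr 1; ring
  rw [e1, e2]
  have p1 : 0 < r ^ (-(M-4)/4) := Real.rpow_pos_of_pos hr _
  have : 0 ≤ r ^ (-(M-4)/4) * (1 - k * r ^ (M/4)) ^ 2 := by positivity
  linarith [this, show r ^ (-(M-4)/4) * (1 - k * r ^ (M/4)) ^ 2 = r ^ (-(M - 4) / 4) +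
    (-2 * k * (r ^ (-(M - 4) / 4) * r ^ (M / 4)) + k ^ 2 * (r ^ (-(M - 4) / 4) * (r ^ (M / 4) * r ^ (M / 4)))) by ring]

section
variable {M lam : ℝ} {F p D q : ℝ → ℝ}

lemma ode_case1 (hM : 9 ≤ M)
    (hS : RadSys M (Ioo 0 1) F p D q (fun r => -(lam / (F r) ^ 2)))
    (hF : OZ 0 F) (hp : OZ (-1/2) p) (hD : OZ 0 D) (hq : OZ (-1/2) q)
    {A r1 : ℝ} (hA : 0 < A) (hr1 : r1 ∈ Ioo (0:ℝ) 1)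
    (hw : ∀ r ∈ Ioo 0 r1, A * r ^ ((2:ℝ)/3) < F r) (hw1 : F r1 = A * r1 ^ ((2:ℝ)/3))
    (hw2 : p r1 = A * ((2:ℝ)/3 * r1 ^ ((2:ℝ)/3 - 1))) (hA3 : A ^ 3 * lB M ≤ lam) : False := by
  set k := r1 ^ (-M/4) with hk
  have hk0 : 0 < k := Real.rpow_pos_of_pos hr1.1 _
  have hl : 0 < lB M := by
    unfold lB
    have : 0 < M - 2/3 := by linarith
    have : 0 < M - 8/3 := by linarith
    positivity
  have hd := diff_sys (A := A) hS
  have ht := (test_sys M k).mono (t := Ioo 0 1) (fun r hr => hr.1)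
  have hW := hd.wronskian (fun r hr => hr.1) ht
  have hneg := neg_of_decr hr1.1 (fun s hs => hW s ⟨hs.1, hs.2.trans_lt hr1.2⟩) ?_ ?_
  · have z1 : F r1 + (-A) * r1 ^ ((2:ℝ)/3) = 0 := by rw [hw1]; ring
    have z2 : p r1 + (-A) * ((2:ℝ)/3 * r1 ^ ((2:ℝ)/3 - 1)) = 0 := by rw [hw2]; ring
    have y1 : r1 ^ (1:ℝ) * k = r1 ^ (-(M-4)/4) := by
      rw [hk, ← Real.rpow_add hr1.1]; congr 1; ring
    have y2 : r1 ^ ((M+4)/4) * (k * k) = r1 ^ (-(M-4)/4) := by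
      rw [hk, ← Real.rpow_add hr1.1, ← Real.rpow_add hr1.1]; congr 1; ring
    have y3 : r1 ^ ((1:ℝ) - 1) * k = r1 ^ (-(M-4)/4 - 1) := by
      rw [hk, ← Real.rpow_add hr1.1]; congr 1; ring
    have y4 : r1 ^ ((M+4)/4 - 1) * (k * k) = r1 ^ (-(M-4)/4 - 1) := by
      rw [hk, ← Real.rpow_add hr1.1, ← Real.rpow_add hr1.1]; congr 1; ring
    have z3 : r1 ^ (-(M-4)/4) + ((-2 * k) * r1 ^ (1:ℝ) + k ^ 2 * r1 ^ ((M+4)/4)) = 0 := by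
      linear_combination (-2) * y1 + y2
    have z4 : (-(M-4)/4) * r1 ^ (-(M-4)/4 - 1) + ((-2 * k) * (1 * r1 ^ ((1:ℝ) - 1)) +
      k ^ 2 * ((M+4)/4 * r1 ^ ((M+4)/4 - 1))) = 0 := by
      linear_combination (-2) * y3 + (M+4)/4 * y4
    simp only [z1, z2, z3, z4] at hneg
    simp at hneg
  · intro s hs
    have hs0 : 0 < s := hs.1
    have hwp : 0 < F s + (-A) * s ^ ((2:ℝ)/3) := by linarith [hw s hs]
    have hph := phi_nonneg (M := M) (k := k) hs0
    have hep := eps_pos hM hk0 hs0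
    have hc : 0 < s ^ (M/2-1) / 4 := by
      have := Real.rpow_pos_of_pos hs0 (M/2-1); positivity
    refine mul_neg_of_pos_of_neg hc ?_
    have hy : 0 < s ^ ((2:ℝ)/3) := Real.rpow_pos_of_pos hs0 _
    obtain ⟨h3, h4⟩ := rpow_23 hs0
    have hcube := cube_aux hA hy (hw s hs) hl hA3
    rw [h3] at hcube
    have he : -(lam / F s ^ 2) + (-A) * (rmu M (2/3) * rmu M (2/3 - 1) * s ^ ((2:ℝ)/3 - 2)) ≤
        2 * lB M / s ^ 2 * (F s + (-A) * s ^ ((2:ℝ)/3)) := by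
      rw [lB_eq, h4]
      refine le_trans (le_of_eq ?_) (hcube.trans (le_of_eq ?_)) <;> ring
    have i1 := mul_le_mul_of_nonneg_left he hph
    have i2 := mul_lt_mul_of_pos_left hep hwp
    linarith
  · have hz := OZ.rpow (M/2)
    have w0 : OZ 0 (fun r => F r + (-A) * r ^ ((2:ℝ)/3)) :=
      hF.add (((OZ.rpow (2/3)).mono (by norm_num)).const_mul (-A))
    have w1 : OZ (-1/2) (fun r => p r + (-A) * ((2:ℝ)/3 * r ^ ((2:ℝ)/3 - 1))) :=
      hp.add ((((OZ.rpow (2/3-1)).mono (by norm_num)).const_mul (2/3)).const_mul (-A))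
    have w2 : OZ (-1/3) (fun r => D r + (-A) * (rmu M (2/3) * r ^ ((2:ℝ)/3 - 1))) :=
      (hD.mono (by norm_num)).add ((((OZ.rpow (2/3-1)).mono (by norm_num)).const_mul _).const_mul (-A))
    have w3 : OZ (-4/3) (fun r => q r + (-A) * (rmu M (2/3) * (((2:ℝ)/3 - 1) * r ^ ((2:ℝ)/3 - 2)))) :=
      (hq.mono (by norm_num)).add
        (((((OZ.rpow (2/3-2)).mono (by norm_num)).const_mul _).const_mul _).const_mul (-A))
    have f0 : OZ (-(M-4)/4) (fun r => r ^ (-(M-4)/4) + ((-2 * k) * r ^ (1:ℝ) + k ^ 2 * r ^ ((M+4)/4))) :=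
      (OZ.rpow _).add ((((OZ.rpow 1).mono (by linarith)).const_mul _).add
        (((OZ.rpow _).mono (by linarith)).const_mul _))
    have f1 : OZ (-(M-4)/4 - 1) (fun r => (-(M-4)/4) * r ^ (-(M-4)/4 - 1) + ((-2 * k) * (1 * r ^ ((1:ℝ) - 1)) +
      k ^ 2 * ((M+4)/4 * r ^ ((M+4)/4 - 1)))) :=
      ((OZ.rpow _).const_mul _).add (((((OZ.rpow (1-1)).mono (by linarith)).const_mul _).const_mul _).add
        ((((OZ.rpow _).mono (by linarith)).const_mul _).const_mul _))
    have f2 : OZ (-(M-4)/4 - 1) (fun r => rmu M (-(M-4)/4) * r ^ (-(M-4)/4 - 1) + ((-2 * k) * (rmu M 1 * r ^ ((1:ℝ) - 1)) +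
      k ^ 2 * (rmu M ((M+4)/4) * r ^ ((M+4)/4 - 1)))) :=
      ((OZ.rpow _).const_mul _).add (((((OZ.rpow (1-1)).mono (by linarith)).const_mul _).const_mul _).add
        ((((OZ.rpow _).mono (by linarith)).const_mul _).const_mul _))
    have f3 : OZ (-(M-4)/4 - 2) (fun r => rmu M (-(M-4)/4) * ((-(M-4)/4 - 1) * r ^ (-(M-4)/4 - 2)) +
      ((-2 * k) * (rmu M 1 * ((1 - 1) * r ^ ((1:ℝ) - 2))) +
      k ^ 2 * (rmu M ((M+4)/4) * (((M+4)/4 - 1) * r ^ ((M+4)/4 - 2))))) :=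
      (((OZ.rpow _).const_mul _).const_mul _).add
       (((((((OZ.rpow (1-2)).mono (by linarith)).const_mul _).const_mul _).const_mul _)).add
        (((((OZ.rpow _).mono (by linarith)).const_mul _).const_mul _).const_mul _))
    refine OZ.tendsto (a := 1/4) (by norm_num) ?_
    exact ((((f0.mul (hz.mul w3)).mono (by linarith)).sub ((w2.mul (hz.mul f1)).mono (by linarith))).add
      ((f2.mul (hz.mul w1)).mono (by linarith))).sub ((w0.mul (hz.mul f3)).mono (by linarith))

end

lemma cube_aux2 {A y F L l : ℝ} (hA : 0 < A) (hy : 0 < y) (hF : A * y ≤ F) (hl0 : 0 < l)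
    (hl : l < A ^ 3 * L) : 0 < -(l / F ^ 2) + A * L / y ^ 2 := by
  have hF0 : 0 < F := lt_of_lt_of_le (by positivity) hF
  have h1 : l / F ^ 2 ≤ l / (A * y) ^ 2 := by gcongr
  have h2 : l / (A * y) ^ 2 < A ^ 3 * L / (A * y) ^ 2 := by gcongr
  have h3 : A ^ 3 * L / (A * y) ^ 2 = A * L / y ^ 2 := by field_simp
  linarith

section
variable {M lam : ℝ} {F p D q : ℝ → ℝ}

lemma strictMono_of_hasDeriv {f f' : ℝ → ℝ} {a b : ℝ} (hd : ∀ s ∈ Icc a b, HasDerivAt f (f' s) s)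
    (hp : ∀ s ∈ Ioo a b, 0 < f' s) : StrictMonoOn f (Icc a b) := by
  apply strictMonoOn_of_deriv_pos (convex_Icc a b)
  · exact fun s hs => (hd s hs).continuousAt.continuousWithinAt
  · intro s hs
    rw [interior_Icc] at hs
    rw [(hd s ⟨hs.1.le, hs.2.le⟩).deriv]; exact hp s hs

/-- abstract outward continuation -/
lemma outward {w w1 w2 w3 e : ℝ → ℝ} (hM : 9 ≤ M) (hd : RadSys M (Ioo 0 1) w w1 w2 w3 e)
    (he : ∀ r ∈ Ioo (0:ℝ) 1, 0 ≤ w r → 0 < e r) (o1 : OZ (-1/2) w1) (o3 : OZ (-4/3) w3)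
    {r1 : ℝ} (hr1 : r1 ∈ Ioo (0:ℝ) 1)
    (hw : ∀ r ∈ Ioo 0 r1, 0 < w r) (hw1 : w r1 = 0) (hw2 : w1 r1 = 0) :
    ∀ r ∈ Ioo r1 1, 0 < w1 r := by
  have hz := OZ.rpow (M/2)
  have c : ∀ a : ℝ, ∀ s : ℝ, 0 < s → 0 < s ^ a := fun a s hs => Real.rpow_pos_of_pos hs a
  have fl3 : ∀ s ∈ Ioo (0:ℝ) 1, HasDerivAt (fun r => r ^ (M/2) * w3 r) (s ^ (M/2-1) / 4 * e s) s :=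
    fun s hs => RadSys.flux hs.1 (hd.d3 s hs)
  have fl1 : ∀ s ∈ Ioo (0:ℝ) 1, HasDerivAt (fun r => r ^ (M/2) * w1 r) (s ^ (M/2-1) / 4 * w2 s) s :=
    fun s hs => RadSys.flux hs.1 (hd.d1 s hs)
  -- inner region
  have w3pos : ∀ r ∈ Ioc 0 r1, 0 < w3 r := by
    intro r hr
    have := pos_of_incr hr.1 (fun s hs => fl3 s ⟨hs.1, (hs.2.trans hr.2).trans_lt hr1.2⟩)
      (fun s hs => mul_pos (by have := c (M/2-1) s hs.1; positivity)
        (he s ⟨hs.1, (hs.2.trans_le hr.2).trans hr1.2⟩ (hw s ⟨hs.1, hs.2.trans_le hr.2⟩).le))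
      (OZ.tendsto (a := 1/4) (by norm_num) ((hz.mul o3).mono (by linarith)))
    exact (pos_iff_pos_of_mul_pos this).mp (c _ r hr.1)
  have w2r1 : 0 < w2 r1 := by
    by_contra hcon
    push Not at hcon
    have hneg : ∀ s ∈ Ioo 0 r1, w2 s < 0 := by
      intro s hs
      have hm := strictMono_of_hasDeriv (f := w2) (f' := w3) (a := s) (b := r1)
        (fun t ht => hd.d2 t ⟨hs.1.trans_le ht.1, ht.2.trans_lt hr1.2⟩)
        (fun t ht => w3pos t ⟨hs.1.trans ht.1, ht.2.le⟩)
      have := hm ⟨le_rfl, hs.2.le⟩ ⟨hs.2.le, le_rfl⟩ hs.2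
      linarith
    have := neg_of_decr hr1.1 (fun s hs => fl1 s ⟨hs.1, hs.2.trans_lt hr1.2⟩)
      (fun s hs => mul_neg_of_pos_of_neg (by have := c (M/2-1) s hs.1; positivity) (hneg s hs))
      (OZ.tendsto (a := 1/4) (by norm_num) ((hz.mul o1).mono (by linarith)))
    simp [hw2] at this
  -- consequence of positivity of w2 on an interval
  have key1 : ∀ r2, r2 < 1 → (∀ s ∈ Ioo r1 r2, 0 < w2 s) → ∀ r ∈ Ioc r1 r2, 0 < w1 r := by
    intro r2 hr2 h2 r hr
    have hm := strictMono_of_hasDeriv (a := r1) (b := r)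
      (fun t ht => fl1 t ⟨hr1.1.trans_le ht.1, (ht.2.trans hr.2).trans_lt hr2⟩)
      (fun t ht => mul_pos (by have := c (M/2-1) t (hr1.1.trans ht.1); positivity)
        (h2 t ⟨ht.1, ht.2.trans_le hr.2⟩))
    have h3 := hm ⟨le_rfl, hr.1.le⟩ ⟨hr.1.le, le_rfl⟩ hr.1
    simp only [hw2, mul_zero] at h3
    exact (pos_iff_pos_of_mul_pos h3).mp (c _ r (hr1.1.trans hr.1))
  have w2pos : ∀ r ∈ Ioo r1 1, 0 < w2 r := by
    intro r hr
    by_contra hcon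
    push Not at hcon
    obtain ⟨c', hc1, hc2, hc3, hc4⟩ := first_nonneg (k := fun s => - w2 s) hr.1
      (fun s hs => (hd.d2 s ⟨hr1.1.trans_le hs.1, hs.2.trans_lt hr.2⟩).neg.continuousAt.continuousWithinAt)
      (by simpa using w2r1) (by simpa using hcon)
    have hc'1 : c' < 1 := hc2.trans_lt hr.2
    have h2 : ∀ s ∈ Ioo r1 c', 0 < w2 s := fun s hs => by simpa using hc4 s hs.1.le hs.2
    have h1 := key1 c' hc'1 h2
    have h0 : ∀ s ∈ Ioo r1 c', 0 < w s := by
      intro s hs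
      have hm := strictMono_of_hasDeriv (f := w) (f' := w1) (a := r1) (b := s)
        (fun t ht => hd.d0 t ⟨hr1.1.trans_le ht.1, (ht.2.trans_lt hs.2).trans hc'1⟩)
        (fun t ht => h1 t ⟨ht.1, (ht.2.trans hs.2).le⟩)
      have := hm ⟨le_rfl, hs.1.le⟩ ⟨hs.1.le, le_rfl⟩ hs.1
      rwa [hw1] at this
    have h3 : ∀ s ∈ Ioo r1 c', 0 < w3 s := by
      intro s hs
      have hm := strictMono_of_hasDeriv (a := r1) (b := s)
        (fun t ht => fl3 t ⟨hr1.1.trans_le ht.1, (ht.2.trans_lt hs.2).trans hc'1⟩)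
        (fun t ht => mul_pos (by have := c (M/2-1) t (hr1.1.trans ht.1); positivity)
          (he t ⟨hr1.1.trans ht.1, (ht.2.trans hs.2).trans hc'1⟩ (h0 t ⟨ht.1, ht.2.trans hs.2⟩).le))
      have h4 := hm ⟨le_rfl, hs.1.le⟩ ⟨hs.1.le, le_rfl⟩ hs.1
      have h5 : 0 < r1 ^ (M/2) * w3 r1 := mul_pos (c _ _ hr1.1) (w3pos r1 ⟨hr1.1, le_rfl⟩)
      exact (pos_iff_pos_of_mul_pos (h5.trans h4)).mp (c _ s (hr1.1.trans hs.1))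
    have hm := strictMono_of_hasDeriv (f := w2) (f' := w3) (a := r1) (b := c')
        (fun t ht => hd.d2 t ⟨hr1.1.trans_le ht.1, ht.2.trans_lt hc'1⟩) h3
    have := hm ⟨le_rfl, hc1.le⟩ ⟨hc1.le, le_rfl⟩ hc1
    simp at hc3
    linarith
  intro r hr
  exact key1 r hr.2 (fun s hs => w2pos s ⟨hs.1, hs.2.trans hr.2⟩) r ⟨hr.1, le_rfl⟩

lemma ode_case2 (hM : 9 ≤ M) (hlam : 0 < lam)
    (hS : RadSys M (Ioo 0 1) F p D q (fun r => -(lam / (F r) ^ 2)))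
    (hp : OZ (-1/2) p) (hq : OZ (-1/2) q)
    (hd1 : HasDerivWithinAt F 0 (Iic 1) 1)
    {A r1 : ℝ} (hA : 0 < A) (hr1 : r1 ∈ Ioo (0:ℝ) 1)
    (hw : ∀ r ∈ Ioo 0 r1, A * r ^ ((2:ℝ)/3) < F r) (hw1 : F r1 = A * r1 ^ ((2:ℝ)/3))
    (hw2 : p r1 = A * ((2:ℝ)/3 * r1 ^ ((2:ℝ)/3 - 1))) (hA3 : lam < A ^ 3 * lB M) : False := by
  have hd := diff_sys (A := A) hS
  have hout := outward hM hd ?_ ?_ ?_ hr1 (fun r hr => by linarith [hw r hr])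
    (by rw [hw1]; ring) (by rw [hw2]; ring)
  · have hder : HasDerivWithinAt (fun r => F r + (-A) * r ^ ((2:ℝ)/3)) (0 + (-A) * ((2:ℝ)/3 * 1 ^ ((2:ℝ)/3 - 1))) (Iic 1) 1 :=
      hd1.add ((Real.hasDerivAt_rpow_const (Or.inl one_ne_zero)).hasDerivWithinAt.const_mul _)
    have hmono : MonotoneOn (fun r => F r + (-A) * r ^ ((2:ℝ)/3)) (Icc r1 1) := by
      refine monotoneOn_of_deriv_nonneg (convex_Icc r1 1) ?_ ?_ ?_
      · intro s hs
        rcases eq_or_lt_of_le hs.2 with h | h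
        · rw [h]; exact hder.continuousWithinAt.mono (fun t ht => ht.2)
        · exact (hd.d0 s ⟨hr1.1.trans_le hs.1, h⟩).continuousAt.continuousWithinAt
      · intro s hs
        rw [interior_Icc] at hs
        exact (hd.d0 s ⟨hr1.1.trans hs.1, hs.2⟩).differentiableAt.differentiableWithinAt
      · intro s hs
        rw [interior_Icc] at hs
        rw [(hd.d0 s ⟨hr1.1.trans hs.1, hs.2⟩).deriv]
        exact (hout s hs).le
    have hder2 := hder.mono (t := Iic 1) (s := Icc r1 1) (fun t ht => ht.2)
    have hnn : 0 ≤ derivWithin (fun r => F r + (-A) * r ^ ((2:ℝ)/3)) (Icc r1 1) 1 := hmono.derivWithin_nonneg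
    rw [hder2.derivWithin (uniqueDiffOn_Icc hr1.2 1 ⟨hr1.2.le, le_rfl⟩)] at hnn
    simp at hnn
    linarith
  · intro r hr h0
    obtain ⟨h3, h4⟩ := rpow_23 hr.1
    have := cube_aux2 hA (Real.rpow_pos_of_pos hr.1 ((2:ℝ)/3)) (F := F r) (by linarith) hlam hA3
    rw [lB_eq, h4]
    refine lt_of_lt_of_eq this ?_
    ring
  · exact hp.add ((((OZ.rpow (2/3-1)).mono (by norm_num)).const_mul (2/3)).const_mul (-A))
  · exact (hq.mono (by norm_num)).add
        (((((OZ.rpow (2/3-2)).mono (by norm_num)).const_mul _).const_mul _).const_mul (-A))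

theorem ode_main (hM : 9 ≤ M) (hlam : 0 < lam)
    (hS : RadSys M (Ioo 0 1) F p D q (fun r => -(lam / (F r) ^ 2)))
    (hpos : ∀ r ∈ Ioo (0:ℝ) 1, 0 < F r) {v0 : ℝ} (hv0 : 0 < v0)
    (hF0 : Tendsto F (nhdsWithin 0 (Ioi 0)) (nhds v0))
    (hp : OZ (-1/2) p) (hD : OZ 0 D) (hq : OZ (-1/2) q) (h1 : F 1 = 1)
    (hd1 : HasDerivWithinAt F 0 (Iic 1) 1) : ∀ r ∈ Ioo (0:ℝ) 1, r ^ ((2:ℝ)/3) ≤ F r := by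
  have hF : OZ 0 F := by
    have : F =O[nhdsWithin 0 (Ioi 0)] fun _ => (1:ℝ) := hF0.isBigO_one ℝ
    simpa [OZ] using this
  set k : ℝ → ℝ := fun r => r * p r - 2/3 * F r with hk
  have hh : ∀ r ∈ Ioo (0:ℝ) 1, HasDerivAt (fun r => F r * r ^ (-(2:ℝ)/3)) (r ^ (-(2:ℝ)/3 - 1) * k r) r := by
    intro r hr
    refine HasDerivAt.congr_deriv ((hS.d0 r hr).mul
      (Real.hasDerivAt_rpow_const (x := r) (p := -(2:ℝ)/3) (Or.inl hr.1.ne'))) ?_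
    have : r ^ (-(2:ℝ)/3) = r ^ (-(2:ℝ)/3 - 1) * r := by
      rw [← Real.rpow_add_one hr.1.ne']; congr 1; ring
    rw [this, hk]; ring
  have hrp : ∀ r : ℝ, 0 < r → r ^ (-(2:ℝ)/3) * r ^ ((2:ℝ)/3) = 1 := by
    intro r hr
    rw [← Real.rpow_add hr]; norm_num
  have hkneg : ∀ r ∈ Ioo (0:ℝ) 1, k r < 0 := by
    intro r hr
    by_contra hcon
    push Not at hcon
    have hk0 : Tendsto k (nhdsWithin 0 (Ioi 0)) (nhds (0 - 2/3 * v0)) := by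
      refine Tendsto.sub ?_ (hF0.const_mul _)
      refine OZ.tendsto (a := 1/2) (by norm_num) ?_
      have := (OZ.rpow 1).mul hp
      simp only [Real.rpow_one] at this
      exact this.mono (by norm_num)
    have hev : ∀ᶠ s in nhdsWithin (0:ℝ) (Ioi 0), k s < 0 :=
      hk0.eventually (gt_mem_nhds (by linarith))
    obtain ⟨δ, hδ0, hδ⟩ := (mem_nhdsGT_iff_exists_Ioo_subset).mp hev
    have hδ0' : (0:ℝ) < δ := hδ0
    set a := min (δ/2) (r/2) with ha
    have ha0 : 0 < a := lt_min (by linarith) (by linarith [hr.1])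
    have har : a < r := (min_le_right _ _).trans_lt (by linarith [hr.1])
    have haδ : a < δ := (min_le_left _ _).trans_lt (by linarith)
    have hkc : ∀ s ∈ Ioo (0:ℝ) 1, ContinuousAt k s := fun s hs =>
      ((continuousAt_id.mul (hS.d1 s hs).continuousAt).sub
        (continuousAt_const.mul (hS.d0 s hs).continuousAt))
    obtain ⟨r1, hc1, hc2, hc3, hc4⟩ := first_nonneg har
      (fun s hs => (hkc s ⟨ha0.trans_le hs.1, hs.2.trans_lt hr.2⟩).continuousWithinAt)
      (hδ ⟨ha0, haδ⟩) hcon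
    have hr1 : r1 ∈ Ioo (0:ℝ) 1 := ⟨ha0.trans hc1, hc2.trans_lt hr.2⟩
    have hkn : ∀ s ∈ Ioo 0 r1, k s < 0 := by
      intro s hs
      rcases le_or_gt a s with h | h
      · exact hc4 s h hs.2
      · exact hδ ⟨hs.1, h.trans haδ⟩
    set A := F r1 * r1 ^ (-(2:ℝ)/3) with hA
    have hA0 : 0 < A := mul_pos (hpos r1 hr1) (Real.rpow_pos_of_pos hr1.1 _)
    have hw : ∀ s ∈ Ioo 0 r1, A * s ^ ((2:ℝ)/3) < F s := by
      intro s hs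
      have hm := strictMono_of_hasDeriv (f := fun r => - (F r * r ^ (-(2:ℝ)/3))) (a := s) (b := r1)
        (fun t ht => (hh t ⟨hs.1.trans_le ht.1, ht.2.trans_lt hr1.2⟩).neg)
        (fun t ht => by
          have := mul_neg_of_pos_of_neg (Real.rpow_pos_of_pos (hs.1.trans ht.1) (-(2:ℝ)/3 - 1))
            (hkn t ⟨hs.1.trans ht.1, ht.2⟩)
          linarith)
      have h2 := hm ⟨le_rfl, hs.2.le⟩ ⟨hs.2.le, le_rfl⟩ hs.2
      have h3 : A < F s * s ^ (-(2:ℝ)/3) := by linarith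
      have h4 := mul_lt_mul_of_pos_right h3 (Real.rpow_pos_of_pos hs.1 ((2:ℝ)/3))
      rwa [mul_assoc (F s), hrp s hs.1, mul_one] at h4
    have hw1 : F r1 = A * r1 ^ ((2:ℝ)/3) := by rw [hA, mul_assoc, hrp r1 hr1.1, mul_one]
    have hw2 : p r1 = A * ((2:ℝ)/3 * r1 ^ ((2:ℝ)/3 - 1)) := by
      rw [Real.rpow_sub_one hr1.1.ne']
      have : r1 * p r1 = 2/3 * F r1 := by simp only [hk] at hc3; linarith
      rw [hw1] at this
      have hne := hr1.1.ne'
      field_simp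
      linarith
    rcases le_or_gt (A ^ 3 * lB M) lam with h | h
    · exact ode_case1 hM hS hF hp hD hq hA0 hr1 hw hw1 hw2 h
    · exact ode_case2 hM hlam hS hp hq hd1 hA0 hr1 hw hw1 hw2 h
  intro r hr
  have hanti : AntitoneOn (fun r => F r * r ^ (-(2:ℝ)/3)) (Icc r 1) := by
    refine antitoneOn_of_deriv_nonpos (convex_Icc r 1) ?_ ?_ ?_
    · intro s hs
      rcases eq_or_lt_of_le hs.2 with h | h
      · rw [h]
        exact (hd1.continuousWithinAt.mono (fun t ht => ht.2)).mul
          (Real.continuousAt_rpow_const _ _ (Or.inl one_ne_zero)).continuousWithinAt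
      · exact (hh s ⟨hr.1.trans_le hs.1, h⟩).continuousAt.continuousWithinAt
    · intro s hs
      rw [interior_Icc] at hs
      exact (hh s ⟨hr.1.trans hs.1, hs.2⟩).differentiableAt.differentiableWithinAt
    · intro s hs
      rw [interior_Icc] at hs
      rw [(hh s ⟨hr.1.trans hs.1, hs.2⟩).deriv]
      exact (mul_neg_of_pos_of_neg (Real.rpow_pos_of_pos (hr.1.trans hs.1) _)
        (hkneg s ⟨hr.1.trans hs.1, hs.2⟩)).le
  have h2 := hanti ⟨le_rfl, hr.2.le⟩ ⟨hr.2.le, le_rfl⟩ hr.2.le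
  simp only [h1, Real.one_rpow, mul_one] at h2
  have h4 := mul_le_mul_of_nonneg_right h2 (Real.rpow_pos_of_pos hr.1 ((2:ℝ)/3)).le
  rwa [mul_assoc (F r), hrp r hr.1, mul_one, one_mul] at h4

end

section lapbasics
variable {N : ℕ}

lemma lap_eq_sum {u : EuclideanSpace ℝ (Fin N) → ℝ} {x : EuclideanSpace ℝ (Fin N)}
    (hu : ContDiffAt ℝ 2 u x) :
    lap u x = ∑ i : Fin N, fderiv ℝ (fderiv ℝ u) x (EuclideanSpace.single i 1)
      (EuclideanSpace.single i 1) := by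
  unfold lap
  refine Finset.sum_congr rfl fun i _ => ?_
  have h1 : DifferentiableAt ℝ (fderiv ℝ u) x :=
    (hu.fderiv_right (m := 1) (by norm_num)).differentiableAt (by norm_num)
  rw [fderiv_clm_apply h1 (differentiableAt_const _)]
  simp

lemma lap_eq_iterated {u : EuclideanSpace ℝ (Fin N) → ℝ} {x : EuclideanSpace ℝ (Fin N)}
    (hu : ContDiffAt ℝ 2 u x) : lap u x = Laplacian.laplacian u x := by
  rw [lap_eq_sum hu, InnerProductSpace.laplacian_eq_iteratedFDeriv_orthonormalBasis u
    (EuclideanSpace.basisFun (Fin N) ℝ)]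
  refine Finset.sum_congr rfl fun i _ => ?_
  rw [iteratedFDeriv_two_apply]
  simp

lemma lap_congr {u v : EuclideanSpace ℝ (Fin N) → ℝ} {x : EuclideanSpace ℝ (Fin N)}
    (h : u =ᶠ[nhds x] v) : lap u =ᶠ[nhds x] lap v := by
  have h2 : ∀ᶠ y in nhds x, u =ᶠ[nhds y] v := h.eventuallyEq_nhds
  filter_upwards [h2] with y hy
  unfold lap
  refine Finset.sum_congr rfl fun i _ => ?_
  have h3 : (fun z => fderiv ℝ u z (EuclideanSpace.single i 1)) =ᶠ[nhds y]
      (fun z => fderiv ℝ v z (EuclideanSpace.single i 1)) := by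
    filter_upwards [hy.eventuallyEq_nhds] with z hz
    rw [hz.fderiv_eq]
  rw [h3.fderiv_eq]

lemma contDiffAt_lap {u : EuclideanSpace ℝ (Fin N) → ℝ} {x : EuclideanSpace ℝ (Fin N)}
    {m n : WithTop ℕ∞} (hu : ContDiffAt ℝ n u x) (hmn : m + 1 + 1 ≤ n) : ContDiffAt ℝ m (lap u) x := by
  unfold lap
  refine ContDiffAt.sum fun i _ => ?_
  refine ContDiffAt.clm_apply ?_ contDiffAt_const
  refine ContDiffAt.fderiv_right (n := m + 1) ?_ le_rfl
  exact ContDiffAt.clm_apply (hu.fderiv_right hmn) contDiffAt_const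

lemma lap_comp_isometry {u : EuclideanSpace ℝ (Fin N) → ℝ} {x : EuclideanSpace ℝ (Fin N)}
    (R : EuclideanSpace ℝ (Fin N) ≃ₗᵢ[ℝ] EuclideanSpace ℝ (Fin N))
    (hu : ContDiffAt ℝ 2 u (R x)) : lap (fun y => u (R y)) x = lap u (R x) := by
  have hR : ContDiffAt ℝ 2 (fun y => u (R y)) x :=
    ContDiffAt.comp x hu R.contDiff.contDiffAt
  rw [lap_eq_iterated hR, lap_eq_iterated hu,
    InnerProductSpace.laplacian_eq_iteratedFDeriv_orthonormalBasis _
      (EuclideanSpace.basisFun (Fin N) ℝ),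
    InnerProductSpace.laplacian_eq_iteratedFDeriv_orthonormalBasis _
      ((EuclideanSpace.basisFun (Fin N) ℝ).map R)]
  refine Finset.sum_congr rfl fun i _ => ?_
  have h := ContinuousLinearEquiv.iteratedFDerivWithin_comp_right R.toContinuousLinearEquiv u
    (s := univ) uniqueDiffOn_univ (x := x) (mem_univ _) 2
  simp only [preimage_univ, iteratedFDerivWithin_univ] at h
  have h' : iteratedFDeriv ℝ 2 (fun y => u (R y)) x = _ := h
  rw [h']
  simp only [ContinuousMultilinearMap.compContinuousLinearMap_apply]
  congr 1
  ext j
  fin_cases j <;> simp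

lemma hasFDerivAt_normsq (y : EuclideanSpace ℝ (Fin N)) :
    HasFDerivAt (fun z : EuclideanSpace ℝ (Fin N) => ‖z‖ ^ 2) (2 • (innerSL ℝ y)) y :=
  (hasStrictFDerivAt_norm_sq y).hasFDerivAt

lemma lap_radial {F F1 : ℝ → ℝ} {F2 : ℝ} {x : EuclideanSpace ℝ (Fin N)}
    (h0 : ∀ᶠ s in nhds (‖x‖ ^ 2), HasDerivAt F (F1 s) s) (h1 : HasDerivAt F1 F2 (‖x‖ ^ 2)) :
    lap (fun y => F (‖y‖ ^ 2)) x = 4 * ‖x‖ ^ 2 * F2 + 2 * N * F1 (‖x‖ ^ 2) := by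
  have hc : ContinuousAt (fun z : EuclideanSpace ℝ (Fin N) => ‖z‖ ^ 2) x := by fun_prop
  have key : ∀ i : Fin N, fderiv ℝ (fun y => fderiv ℝ (fun y => F (‖y‖ ^ 2)) y
      (EuclideanSpace.single i 1)) x (EuclideanSpace.single i 1)
      = 4 * F2 * (x i) ^ 2 + 2 * F1 (‖x‖ ^ 2) := by
    intro i
    have e1 : (fun y => fderiv ℝ (fun y => F (‖y‖ ^ 2)) y (EuclideanSpace.single i 1)) =ᶠ[nhds x]
        (fun y => F1 (‖y‖ ^ 2) * (2 * y i)) := by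
      filter_upwards [hc.eventually h0] with y hy
      have := (hy.comp_hasFDerivAt y (hasFDerivAt_normsq y)).fderiv
      have h' : fderiv ℝ (fun y => F (‖y‖ ^ 2)) y = _ := this
      rw [h']
      simp [EuclideanSpace.inner_single_right]
    rw [e1.fderiv_eq]
    have d1 : HasFDerivAt (fun y : EuclideanSpace ℝ (Fin N) => F1 (‖y‖ ^ 2))
      (F2 • (2 • (innerSL ℝ x))) x := h1.comp_hasFDerivAt x (hasFDerivAt_normsq x)
    have d2 : HasFDerivAt (fun y : EuclideanSpace ℝ (Fin N) => 2 * y i)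
      ((2:ℝ) • (EuclideanSpace.proj i : EuclideanSpace ℝ (Fin N) →L[ℝ] ℝ)) x :=
      ((EuclideanSpace.proj i : EuclideanSpace ℝ (Fin N) →L[ℝ] ℝ).hasFDerivAt).const_mul 2
    have d3 := (d1.mul d2).fderiv
    have h' : fderiv ℝ (fun y : EuclideanSpace ℝ (Fin N) => F1 (‖y‖ ^ 2) * (2 * y i)) x = _ := d3
    rw [h']
    simp [EuclideanSpace.inner_single_right]
    ring
  unfold lap
  rw [Finset.sum_congr rfl fun i _ => key i, Finset.sum_add_distrib, ← Finset.mul_sum,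
    EuclideanSpace.norm_sq_eq]
  simp
  ring

end lapbasics

section bdd
variable {N : ℕ}

lemma integrable_mul_aux {f g : EuclideanSpace ℝ (Fin N) → ℝ} {K : Set (EuclideanSpace ℝ (Fin N))}
    (hK : IsCompact K) (hf : ContinuousOn f K) (hg : Continuous g) (hs : tsupport g ⊆ K) :
    Integrable (fun x => f x * g x) := by
  have h1 : IntegrableOn (fun x => f x * g x) K :=
    (hf.mul hg.continuousOn).integrableOn_compact hK
  refine (integrableOn_iff_integrable_of_support_subset ?_).mp h1
  refine subset_trans ?_ ((subset_tsupport g).trans hs)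
  exact Function.support_mul_subset_right _ _

lemma tsupport_lap_subset (g : EuclideanSpace ℝ (Fin N) → ℝ) : tsupport (lap g) ⊆ tsupport g := by
  refine closure_minimal ?_ (isClosed_tsupport g)
  intro x hx
  by_contra hcon
  have h0 : g =ᶠ[nhds x] fun _ => 0 := by
    filter_upwards [(isClosed_tsupport g).isOpen_compl.mem_nhds hcon] with y hy
    exact image_eq_zero_of_notMem_tsupport hy
  have h1 := (lap_congr h0).eq_of_nhds
  apply hx
  rw [h1]
  simp [lap]

lemma ibp_lap {f g : EuclideanSpace ℝ (Fin N) → ℝ} {K : Set (EuclideanSpace ℝ (Fin N))}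
    (hK : IsCompact K) (hf : ∀ x ∈ K, ContDiffAt ℝ 2 f x) (hg : ContDiff ℝ 2 g)
    (hs : tsupport g ⊆ K) : ∫ x, lap f x * g x = ∫ x, f x * lap g x := by
  have hfc : ContinuousOn f K := fun x hx => (hf x hx).continuousAt.continuousWithinAt
  have hf1 : ∀ (v : EuclideanSpace ℝ (Fin N)), ∀ x ∈ K, ContDiffAt ℝ 1 (fun y => fderiv ℝ f y v) x :=
    fun v x hx => ContDiffAt.clm_apply ((hf x hx).fderiv_right (by norm_num)) contDiffAt_const
  have hf1c : ∀ v, ContinuousOn (fun y => fderiv ℝ f y v) K :=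
    fun v x hx => (hf1 v x hx).continuousAt.continuousWithinAt
  have hf2c : ∀ v, ContinuousOn (fun y => fderiv ℝ (fun y => fderiv ℝ f y v) y v) K := by
    intro v x hx
    have : ContDiffAt ℝ 0 (fun y => fderiv ℝ (fun y => fderiv ℝ f y v) y v) x :=
      ContDiffAt.clm_apply ((hf1 v x hx).fderiv_right (by norm_num)) contDiffAt_const
    exact this.continuousAt.continuousWithinAt
  have hg1 : ∀ v, ContDiff ℝ 1 (fun y => fderiv ℝ g y v) :=
    fun v => (hg.fderiv_right (by norm_num)).clm_apply contDiff_const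
  have hg2 : ∀ v, Continuous (fun y => fderiv ℝ (fun y => fderiv ℝ g y v) y v) := fun v =>
    (((hg1 v).fderiv_right (m := 0) (by norm_num)).clm_apply contDiff_const).continuous
  have hs1 : ∀ v, tsupport (fun y => fderiv ℝ g y v) ⊆ K :=
    fun v => (tsupport_fderiv_apply_subset ℝ v).trans hs
  have hs2 : ∀ v, tsupport (fun y => fderiv ℝ (fun y => fderiv ℝ g y v) y v) ⊆ K :=
    fun v => (tsupport_fderiv_apply_subset ℝ v).trans (hs1 v)
  have key : ∀ v, ∫ x, fderiv ℝ (fun y => fderiv ℝ f y v) x v * g x =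
      ∫ x, f x * fderiv ℝ (fun y => fderiv ℝ g y v) x v := by
    intro v
    have i1 := integral_mul_fderiv_eq_neg_fderiv_mul_of_integrable (μ := volume)
      (f := fun y => fderiv ℝ f y v) (g := g) (v := v)
      (integrable_mul_aux hK (hf2c v) hg.continuous hs)
      (integrable_mul_aux hK (hf1c v) (hg1 v).continuous (hs1 v))
      (integrable_mul_aux hK (hf1c v) hg.continuous hs)
      (fun x hx => (hf1 v x (hs hx)).differentiableAt (by norm_num))
      (fun x hx => hg.differentiable (by norm_num) x)
    have i2 := integral_mul_fderiv_eq_neg_fderiv_mul_of_integrable (μ := volume)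
      (f := f) (g := fun y => fderiv ℝ g y v) (v := v)
      (integrable_mul_aux hK (hf1c v) (hg1 v).continuous (hs1 v))
      (integrable_mul_aux hK hfc (hg2 v) (hs2 v))
      (integrable_mul_aux hK hfc (hg1 v).continuous (hs1 v))
      (fun x hx => (hf x (hs1 v hx)).differentiableAt (by norm_num))
      (fun x hx => (hg1 v).differentiable (by norm_num) x)
    rw [i2, i1, neg_neg]
  unfold lap
  simp_rw [Finset.sum_mul, Finset.mul_sum]
  rw [integral_finsetSum, integral_finsetSum]
  · exact Finset.sum_congr rfl fun i _ => key _
  · exact fun i _ => integrable_mul_aux hK hfc (hg2 _) (hs2 _)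
  · exact fun i _ => integrable_mul_aux hK (hf2c _) hg.continuous hs

lemma IsClassicalSolution.contDiffAt {lam : ℝ} {u : EuclideanSpace ℝ (Fin N) → ℝ}
    (h : IsClassicalSolution N lam u) {x : EuclideanSpace ℝ (Fin N)} (hx : x ∈ ball 0 1) :
    ContDiffAt ℝ 4 u x :=
  h.contDiffOn.contDiffAt (mem_of_superset (isOpen_ball.mem_nhds hx) ball_subset_closedBall)

lemma solSet_bddAbove : BddAbove (solSet N) := by
  let φ : ContDiffBump (0 : EuclideanSpace ℝ (Fin N)) := ⟨1/4, 1/2, by norm_num, by norm_num⟩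
  set K : Set (EuclideanSpace ℝ (Fin N)) := closedBall 0 (1/2) with hKdef
  have hK : IsCompact K := isCompact_closedBall _ _
  have hKb : K ⊆ ball 0 1 := closedBall_subset_ball (by norm_num)
  have hts : tsupport (φ : EuclideanSpace ℝ (Fin N) → ℝ) ⊆ K := φ.tsupport_eq.le
  have hφ4 : ContDiff ℝ 4 (φ : EuclideanSpace ℝ (Fin N) → ℝ) := φ.contDiff
  have hl2 : ContDiff ℝ 2 (lap (φ : EuclideanSpace ℝ (Fin N) → ℝ)) :=
    contDiff_iff_contDiffAt.mpr fun x => contDiffAt_lap hφ4.contDiffAt (by norm_num)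
  have hl0 : ContDiff ℝ 0 (lap (lap (φ : EuclideanSpace ℝ (Fin N) → ℝ))) :=
    contDiff_iff_contDiffAt.mpr fun x => contDiffAt_lap hl2.contDiffAt (by norm_num)
  have hts1 := (tsupport_lap_subset (φ : EuclideanSpace ℝ (Fin N) → ℝ)).trans hts
  have hts2 := (tsupport_lap_subset (lap (φ : EuclideanSpace ℝ (Fin N) → ℝ))).trans hts1
  have hI : 0 < ∫ x, φ x := φ.integral_pos
  have hint2 : Integrable (lap (lap (φ : EuclideanSpace ℝ (Fin N) → ℝ))) := by
    have := integrable_mul_aux hK (f := fun _ => 1) continuousOn_const hl0.continuous hts2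
    simpa using this
  have hint0 : Integrable (φ : EuclideanSpace ℝ (Fin N) → ℝ) := φ.integrable
  refine ⟨(∫ x, |lap (lap φ) x|) / ∫ x, φ x, ?_⟩
  rintro lam ⟨hlam, u, hu⟩
  rw [le_div_iff₀ hI]
  have hc4 : ∀ x ∈ K, ContDiffAt ℝ 4 u x := fun x hx => hu.contDiffAt (hKb hx)
  have hc2 : ∀ x ∈ K, ContDiffAt ℝ 2 (lap u) x := fun x hx => contDiffAt_lap (hc4 x hx) (by norm_num)
  have hc0 : ContinuousOn (lap (lap u)) K := fun x hx =>
    (contDiffAt_lap (m := 0) (hc2 x hx) (by norm_num)).continuousAt.continuousWithinAt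
  have e1 := ibp_lap hK hc2 (hφ4.of_le (by norm_num)) hts
  have e2 := ibp_lap hK (fun x hx => (hc4 x hx).of_le (by norm_num)) hl2 hts1
  calc lam * ∫ x, φ x = ∫ x, lam * φ x := (integral_const_mul _ _).symm
    _ ≤ ∫ x, lap (lap u) x * φ x := by
      refine integral_mono (hint0.const_mul _) (integrable_mul_aux hK hc0 hφ4.continuous hts) ?_
      intro x
      by_cases hx : x ∈ K
      · refine mul_le_mul_of_nonneg_right ?_ φ.nonneg
        have h1 := hu.eqn x (hKb hx)
        have h2 := hu.pos x (hKb hx)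
        have h3 := hu.lt_one x (hKb hx)
        change lap (lap u) x = _ at h1
        rw [h1, le_div_iff₀ (by have : 0 < 1 - u x := by linarith
                                positivity)]
        have : (1 - u x) ^ 2 ≤ 1 := by nlinarith
        nlinarith
      · have : φ x = 0 := image_eq_zero_of_notMem_tsupport (fun h => hx (hts h))
        simp [this]
    _ = ∫ x, u x * lap (lap φ) x := by rw [e1, e2]
    _ ≤ ∫ x, |lap (lap φ) x| := by
      refine integral_mono (integrable_mul_aux hK (fun x hx => (hc4 x hx).continuousAt.continuousWithinAt)
        hl0.continuous hts2) hint2.abs ?_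
      intro x
      by_cases hx : x ∈ K
      · have h2 := hu.pos x (hKb hx)
        have h3 := hu.lt_one x (hKb hx)
        calc u x * lap (lap φ) x ≤ |u x * lap (lap φ) x| := le_abs_self _
          _ = u x * |lap (lap φ) x| := by rw [abs_mul, abs_of_pos h2]
          _ ≤ 1 * |lap (lap φ) x| := by gcongr
          _ = _ := one_mul _
      · have : lap (lap φ) x = 0 := image_eq_zero_of_notMem_tsupport (fun h => hx (hts2 h))
        simp [this]

end bdd

section exist

noncomputable def Mw (w : ℝ → ℝ) (D : ℝ → ℝ) (ρ : ℝ) : ℝ := ∫ σ in (0:ℝ)..1, w σ * D (ρ * σ ^ 2)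

lemma Mw_continuous {w D : ℝ → ℝ} (hw : Continuous w) (hD : Continuous D) : Continuous (Mw w D) := by
  unfold Mw
  refine intervalIntegral.continuous_parametric_intervalIntegral_of_continuous' ?_ 0 1
  simp only [Function.uncurry_def]
  fun_prop

lemma Mw_hasDerivAt {w D : ℝ → ℝ} (hw : Continuous w) (hD : ContDiff ℝ 1 D) (ρ : ℝ) :
    HasDerivAt (Mw w D) (Mw (fun σ => w σ * σ ^ 2) (deriv D) ρ) ρ := by
  have hDc := hD.continuous
  have hD' : Continuous (deriv D) := hD.continuous_deriv (le_refl _)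
  obtain ⟨C, hC⟩ : ∃ C, ∀ z ∈ (Icc (ρ - 1) (ρ + 1)) ×ˢ (Icc (0:ℝ) 1),
      ‖w z.2 * z.2 ^ 2 * deriv D (z.1 * z.2 ^ 2)‖ ≤ C :=
    (isCompact_Icc.prod isCompact_Icc).exists_bound_of_continuousOn
      (f := fun z : ℝ × ℝ => w z.2 * z.2 ^ 2 * deriv D (z.1 * z.2 ^ 2)) (by fun_prop)
  have := (intervalIntegral.hasDerivAt_integral_of_dominated_loc_of_deriv_le (μ := volume)
    (F := fun ρ σ => w σ * D (ρ * σ ^ 2)) (F' := fun ρ σ => w σ * σ ^ 2 * deriv D (ρ * σ ^ 2))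
    (a := 0) (b := 1) (bound := fun _ => C) (x₀ := ρ) (s := Icc (ρ - 1) (ρ + 1))
    (Icc_mem_nhds (by linarith) (by linarith)) ?_ ?_ ?_ ?_ ?_ ?_).2
  · exact this
  · exact Eventually.of_forall fun x => (Continuous.aestronglyMeasurable (by fun_prop))
  · exact Continuous.intervalIntegrable (by fun_prop) _ _
  · exact Continuous.aestronglyMeasurable (by fun_prop)
  · refine Eventually.of_forall fun t ht x hx => ?_
    rw [uIoc_of_le zero_le_one] at ht
    exact hC (x, t) ⟨hx, ⟨ht.1.le, ht.2⟩⟩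
  · exact intervalIntegrable_const
  · refine Eventually.of_forall fun t ht x hx => ?_
    have h1 : HasDerivAt D (deriv D (x * t ^ 2)) (x * t ^ 2) :=
      (hD.differentiable (by norm_num) _).hasDerivAt
    have h2 : HasDerivAt (fun x : ℝ => x * t ^ 2) (t ^ 2) x := by
      simpa using (hasDerivAt_id x).mul_const (t ^ 2)
    refine HasDerivAt.congr_deriv ((h1.comp x h2).const_mul (w t)) ?_
    ring

lemma Mw_contDiff (n : ℕ) : ∀ {w D : ℝ → ℝ}, Continuous w → ContDiff ℝ n D →
    ContDiff ℝ n (Mw w D) := by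
  induction n with
  | zero =>
    intro w D hw hD
    exact contDiff_zero.2 (Mw_continuous hw (contDiff_zero.1 hD))
  | succ n ih =>
    intro w D hw hD
    have h1 : ContDiff ℝ 1 D := hD.of_le (by norm_cast; omega)
    have hd := fun ρ => Mw_hasDerivAt hw h1 ρ
    push_cast
    rw [contDiff_succ_iff_deriv]
    refine ⟨fun ρ => (hd ρ).differentiableAt, by simp, ?_⟩
    have : deriv (Mw w D) = Mw (fun σ => w σ * σ ^ 2) (deriv D) := funext fun ρ => (hd ρ).deriv
    rw [this]
    refine ih (by fun_prop) ?_
    have hDs : ContDiff ℝ ((n:WithTop ℕ∞) + 1) D := by exact_mod_cast hD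
    exact (contDiff_succ_iff_deriv.1 hDs).2.2

/-- averaging with the weight of dimension `N` -/
noncomputable def Mn (N : ℕ) (D : ℝ → ℝ) : ℝ → ℝ := Mw (fun σ => 2 * σ ^ (N - 1)) D

noncomputable def Kn (N : ℕ) (D : ℝ → ℝ) (ρ : ℝ) : ℝ := ∫ t in (0:ℝ)..ρ, Mn N D t / 4

variable {N : ℕ}

lemma Mn_continuous {D : ℝ → ℝ} (hD : Continuous D) : Continuous (Mn N D) :=
  Mw_continuous (by fun_prop) hD

lemma Kn_hasDerivAt {D : ℝ → ℝ} (hD : Continuous D) (ρ : ℝ) :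
    HasDerivAt (Kn N D) (Mn N D ρ / 4) ρ := by
  have hc : Continuous fun t => Mn N D t / 4 := (Mn_continuous hD).div_const 4
  exact intervalIntegral.integral_hasDerivAt_right (hc.intervalIntegrable _ _)
    (hc.stronglyMeasurableAtFilter _ _) hc.continuousAt

lemma Kn_contDiff (n : ℕ) {D : ℝ → ℝ} (hD : ContDiff ℝ n D) : ContDiff ℝ (n + 1 : ℕ) (Kn N D) := by
  push_cast
  rw [contDiff_succ_iff_deriv]
  refine ⟨fun ρ => (Kn_hasDerivAt hD.continuous ρ).differentiableAt, by simp, ?_⟩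
  have : deriv (Kn N D) = fun ρ => Mn N D ρ / 4 :=
    funext fun ρ => (Kn_hasDerivAt hD.continuous ρ).deriv
  rw [this]
  exact (Mw_contDiff n (by fun_prop) hD).div_const 4

lemma Mn_eq (hN : 1 ≤ N) {D : ℝ → ℝ} (hD : ContDiff ℝ 1 D) (ρ : ℝ) :
    ρ * deriv (Mn N D) ρ + N / 2 * Mn N D ρ = D ρ := by
  have hDc := hD.continuous
  have hD' : Continuous (deriv D) := hD.continuous_deriv (le_refl _)
  have h1 : deriv (Mn N D) ρ = _ := (Mw_hasDerivAt (by fun_prop) hD ρ).deriv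
  rw [h1]
  unfold Mn Mw
  rw [← intervalIntegral.integral_const_mul, ← intervalIntegral.integral_const_mul,
    ← intervalIntegral.integral_add]
  rotate_left
  · exact Continuous.intervalIntegrable (by fun_prop) _ _
  · exact Continuous.intervalIntegrable (by fun_prop) _ _
  have h2 : ∀ σ ∈ uIcc (0:ℝ) 1, HasDerivAt (fun σ : ℝ => σ ^ N * D (ρ * σ ^ 2))
      (ρ * (2 * σ ^ (N - 1) * σ ^ 2 * deriv D (ρ * σ ^ 2)) + N / 2 * (2 * σ ^ (N - 1) * D (ρ * σ ^ 2))) σ := by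
    intro σ _
    have a1 : HasDerivAt D (deriv D (ρ * σ ^ 2)) (ρ * σ ^ 2) :=
      (hD.differentiable (by norm_num) _).hasDerivAt
    have a2 : HasDerivAt (fun σ : ℝ => ρ * σ ^ 2) (ρ * (2 * σ)) σ := by
      simpa using (hasDerivAt_pow 2 σ).const_mul ρ
    refine HasDerivAt.congr_deriv ((hasDerivAt_pow N σ).mul (a1.comp σ a2)) ?_
    obtain ⟨k, rfl⟩ : ∃ k, N = k + 1 := ⟨N - 1, by omega⟩
    simp
    ring
  rw [intervalIntegral.integral_eq_sub_of_hasDerivAt h2 (Continuous.intervalIntegrable (by fun_prop) _ _)]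
  simp [show N ≠ 0 by omega]

lemma Mn_bound {D : ℝ → ℝ} {C R : ℝ} (h : ∀ r, |r| ≤ R → |D r| ≤ C) : ∀ r, |r| ≤ R → |Mn N D r| ≤ 2 * C := by
  intro r hr
  have hC : 0 ≤ C := (abs_nonneg _).trans (h r hr)
  have := intervalIntegral.norm_integral_le_of_norm_le_const (a := 0) (b := 1) (C := 2 * C)
    (f := fun σ : ℝ => 2 * σ ^ (N - 1) * D (r * σ ^ 2)) ?_
  · simpa [Mn, Mw] using this
  · intro σ hσ
    rw [uIoc_of_le zero_le_one] at hσ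
    have h1 : |σ ^ (N-1)| ≤ 1 := by
      rw [abs_of_nonneg (pow_nonneg hσ.1.le _)]
      exact pow_le_one₀ hσ.1.le hσ.2
    have h2 : |D (r * σ ^ 2)| ≤ C := by
      apply h
      rw [abs_mul, abs_of_nonneg (sq_nonneg σ)]
      have : σ ^ 2 ≤ 1 := pow_le_one₀ hσ.1.le hσ.2
      nlinarith [abs_nonneg r]
    rw [Real.norm_eq_abs, abs_mul, abs_mul, abs_two]
    nlinarith [abs_nonneg (D (r * σ ^ 2)), abs_nonneg (σ ^ (N-1))]

lemma Kn_bound {D : ℝ → ℝ} {C : ℝ} (h : ∀ r, |r| ≤ 3 → |D r| ≤ C) : ∀ r, |r| ≤ 3 → |Kn N D r| ≤ 2 * C := by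
  intro r hr
  have hC : 0 ≤ C := (abs_nonneg _).trans (h r hr)
  have := intervalIntegral.norm_integral_le_of_norm_le_const (a := 0) (b := r) (C := C / 2)
    (f := fun t => Mn N D t / 4) ?_
  · rw [Real.norm_eq_abs] at this
    unfold Kn
    have : C / 2 * |r - 0| ≤ 2 * C := by simp; nlinarith
    linarith
  · intro t ht
    have ht' : |t| ≤ 3 := by
      rw [mem_uIoc] at ht
      rw [abs_le] at hr ⊢
      rcases ht with ht | ht <;> constructor <;> linarith
    have := Mn_bound (N := N) h t ht'
    rw [Real.norm_eq_abs, abs_div, abs_of_pos (by norm_num : (0:ℝ) < 4)]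
    linarith

lemma Mn_sub {D G : ℝ → ℝ} (hD : Continuous D) (hG : Continuous G) (r : ℝ) :
    Mn N (fun s => D s - G s) r = Mn N D r - Mn N G r := by
  unfold Mn Mw
  rw [← intervalIntegral.integral_sub]
  · congr 1; ext; ring
  · exact Continuous.intervalIntegrable (by fun_prop) _ _
  · exact Continuous.intervalIntegrable (by fun_prop) _ _

lemma Kn_sub {D G : ℝ → ℝ} (hD : Continuous D) (hG : Continuous G) (r : ℝ) :
    Kn N (fun s => D s - G s) r = Kn N D r - Kn N G r := by
  have h1 := Mn_continuous (N := N) hD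
  have h2 := Mn_continuous (N := N) hG
  unfold Kn
  rw [← intervalIntegral.integral_sub]
  · congr 1; ext; rw [Mn_sub hD hG]; ring
  · exact Continuous.intervalIntegrable (by fun_prop) _ _
  · exact Continuous.intervalIntegrable (by fun_prop) _ _

lemma Kn_continuous {D : ℝ → ℝ} (hD : Continuous D) : Continuous (Kn N D) :=
  continuous_iff_continuousAt.2 fun r => (Kn_hasDerivAt hD r).continuousAt

noncomputable def Sn (N : ℕ) (f : ℝ → ℝ) (r : ℝ) : ℝ :=
  Kn N (Kn N f) r - Kn N (Kn N f) 1 - Mn N (Kn N f) 1 / 4 * (r - 1)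

lemma Sn_continuous {D : ℝ → ℝ} (hD : Continuous D) : Continuous (Sn N D) := by
  have := Kn_continuous (N := N) (Kn_continuous (N := N) hD)
  unfold Sn
  fun_prop

lemma Sn_sub {D G : ℝ → ℝ} (hD : Continuous D) (hG : Continuous G) (r : ℝ) :
    Sn N (fun s => D s - G s) r = Sn N D r - Sn N G r := by
  have h1 : Kn N (fun s => D s - G s) = fun s => Kn N D s - Kn N G s := funext fun s => Kn_sub hD hG s
  have hD' := Kn_continuous (N := N) hD
  have hG' := Kn_continuous (N := N) hG
  unfold Sn
  rw [h1, Kn_sub hD' hG', Kn_sub hD' hG', Mn_sub hD' hG']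
  ring

lemma Sn_bound {D : ℝ → ℝ} {C : ℝ} (h : ∀ r, |r| ≤ 3 → |D r| ≤ C) : ∀ r, |r| ≤ 3 → |Sn N D r| ≤ 12 * C := by
  intro r hr
  have k1 := Kn_bound (N := N) h
  have k2 := Kn_bound (N := N) k1
  have m2 := Mn_bound (N := N) k1 1 (by norm_num)
  have a1 := k2 r hr
  have a2 := k2 1 (by norm_num)
  have hC : 0 ≤ C := (abs_nonneg _).trans (h r hr)
  have a3 : |Mn N (Kn N D) 1 / 4 * (r - 1)| ≤ 4 * C := by
    rw [abs_mul, abs_div, abs_of_pos (by norm_num : (0:ℝ) < 4)]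
    have : |r - 1| ≤ 4 := by rw [abs_le] at hr ⊢; constructor <;> linarith
    nlinarith [abs_nonneg (r - 1), abs_nonneg (Mn N (Kn N D) 1)]
  unfold Sn
  rw [abs_le] at a1 a2 a3 ⊢
  constructor <;> linarith

end exist

section exist
variable {N : ℕ}

noncomputable def bmp : ContDiffBump (0:ℝ) := ⟨1/4, 1/2, by norm_num, by norm_num⟩
noncomputable def chi : ContDiffBump (0:ℝ) := ⟨2, 3, by norm_num, by norm_num⟩
noncomputable def gg (s : ℝ) : ℝ := ((1 - s * bmp s) ^ 2)⁻¹

lemma sbmp_abs (s : ℝ) : |s * bmp s| ≤ 1 / 2 := by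
  by_cases h : s ∈ ball (0:ℝ) (1/2)
  · have h1 : |s| < 1 / 2 := by simpa using h
    rw [abs_mul, abs_of_nonneg bmp.nonneg]
    have := bmp.le_one (x := s)
    have := bmp.nonneg (x := s)
    nlinarith [abs_nonneg s]
  · have : bmp s = 0 := bmp.zero_of_le_dist (by simpa [bmp] using h)
    rw [this]; simp

lemma gg_contDiff : ContDiff ℝ 4 gg := by
  unfold gg
  refine ContDiff.inv ?_ ?_
  · have : ContDiff ℝ 4 (bmp : ℝ → ℝ) := bmp.contDiff
    fun_prop
  · intro s
    have := abs_le.1 (sbmp_abs s)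
    have : 0 < 1 - s * bmp s := by linarith
    positivity

lemma gg_pos (s : ℝ) : 0 < gg s := by
  unfold gg
  have := abs_le.1 (sbmp_abs s)
  have : 0 < 1 - s * bmp s := by linarith
  positivity

lemma gg_le (s : ℝ) : gg s ≤ 4 := by
  unfold gg
  have := abs_le.1 (sbmp_abs s)
  have h : 1 / 2 ≤ 1 - s * bmp s := by linarith
  rw [inv_le_comm₀ (by positivity) (by norm_num)]
  nlinarith

lemma gg_eq {s : ℝ} (h : |s| ≤ 1 / 4) : gg s = ((1 - s) ^ 2)⁻¹ := by
  have : bmp s = 1 := bmp.one_of_mem_closedBall (by simpa [bmp] using h)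
  unfold gg
  rw [this, mul_one]

lemma gg_lip : ∃ L : NNReal, LipschitzWith L gg := by
  have h1 : ContDiff ℝ 1 (fun s => gg s - 1) := (gg_contDiff.of_le (by norm_num)).sub contDiff_const
  have h2 : HasCompactSupport (fun s => gg s - 1) := by
    refine HasCompactSupport.intro (K := closedBall (0:ℝ) (1/2)) (isCompact_closedBall _ _) ?_
    intro s hs
    have : bmp s = 0 := bmp.zero_of_le_dist (by
      simp [bmp] at hs ⊢; linarith)
    simp [gg, this]
  obtain ⟨L, hL⟩ := h1.lipschitzWith_of_hasCompactSupport h2 (by norm_num)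
  refine ⟨L, LipschitzWith.of_dist_le_mul fun x y => ?_⟩
  have := hL.dist_le_mul x y
  rwa [Real.dist_eq, sub_sub_sub_cancel_right, ← Real.dist_eq] at this

lemma exists_fixed : ∃ ε : ℝ, 0 < ε ∧ ε * 48 ≤ 1 / 4 ∧ ∃ f : ℝ → ℝ, Continuous f ∧
    ∀ r, f r = chi r * gg (ε * Sn N f r) := by
  obtain ⟨L, hL⟩ := gg_lip
  obtain ⟨ε, hε, h1, h2⟩ : ∃ ε : ℝ, 0 < ε ∧ ε * 48 ≤ 1 / 4 ∧ L * ε * 12 ≤ 1 / 2 := by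
    refine ⟨1 / (24 * (L + 8)), by positivity, ?_, ?_⟩
    · have : (0:ℝ) ≤ L := L.2
      rw [div_mul_eq_mul_div, div_le_div_iff₀ (by positivity) (by norm_num)]; linarith
    · have : (0:ℝ) ≤ L := L.2
      field_simp
      linarith
  refine ⟨ε, hε, h1, ?_⟩
  have hcont : ∀ f : ℝ → ℝ, Continuous f → Continuous fun r => chi r * gg (ε * Sn N f r) := by
    intro f hf
    have := Sn_continuous (N := N) hf
    have := gg_contDiff.continuous
    have := chi.continuous
    fun_prop
  have hbd : ∀ f : ℝ → ℝ, ∀ r, ‖chi r * gg (ε * Sn N f r)‖ ≤ 4 := by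
    intro f r
    rw [Real.norm_eq_abs, abs_of_nonneg (mul_nonneg chi.nonneg (gg_pos _).le)]
    have := gg_le (ε * Sn N f r)
    have := (gg_pos (ε * Sn N f r)).le
    have := chi.le_one (x := r)
    have := chi.nonneg (x := r)
    nlinarith
  obtain ⟨T, hTr⟩ : ∃ T : BoundedContinuousFunction ℝ ℝ → BoundedContinuousFunction ℝ ℝ,
      ∀ f r, T f r = chi r * gg (ε * Sn N f r) :=
    ⟨fun f => BoundedContinuousFunction.ofNormedAddCommGroup (fun r => chi r * gg (ε * Sn N f r))
      (hcont f f.continuous) 4 (hbd f), fun f r => rfl⟩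
  have hT : ContractingWith (1/2) T := by
    refine ⟨by rw [← NNReal.coe_lt_coe]; norm_num, LipschitzWith.of_dist_le_mul fun f g => ?_⟩
    rw [BoundedContinuousFunction.dist_le (by positivity)]
    intro r
    rw [hTr, hTr, Real.dist_eq, ← mul_sub, abs_mul, abs_of_nonneg chi.nonneg]
    by_cases hr : |r| ≤ 3
    · have a1 := hL.dist_le_mul (ε * Sn N f r) (ε * Sn N g r)
      rw [Real.dist_eq, Real.dist_eq, ← mul_sub, ← Sn_sub f.continuous g.continuous, abs_mul,
        abs_of_pos hε] at a1
      have a2 := Sn_bound (N := N) (D := fun s => f s - g s) (C := dist f g) (fun s _ => by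
        have := BoundedContinuousFunction.dist_coe_le_dist (f := f) (g := g) s
        rwa [Real.dist_eq] at this) r hr
      have a3 : |gg (ε * Sn N f r) - gg (ε * Sn N g r)| ≤ L * ε * (12 * dist f g) := by
        refine a1.trans ?_
        rw [← mul_assoc]
        exact mul_le_mul_of_nonneg_left a2 (by positivity)
      have a4 : L * ε * (12 * dist f g) ≤ 1 / 2 * dist f g := by
        nlinarith [dist_nonneg (x := f) (y := g)]
      have := chi.le_one (x := r)
      have := chi.nonneg (x := r)
      push_cast
      nlinarith [abs_nonneg (gg (ε * Sn N f r) - gg (ε * Sn N g r))]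
    · have : chi r = 0 := chi.zero_of_le_dist (by
        simp [chi] at hr ⊢; linarith)
      rw [this, zero_mul]; positivity
  refine ⟨hT.fixedPoint, hT.fixedPoint.continuous, fun r => ?_⟩
  have h : T hT.fixedPoint = hT.fixedPoint := hT.fixedPoint_isFixedPt
  rw [← hTr, h]

lemma Sn_contDiff (n : ℕ) {f : ℝ → ℝ} (hf : ContDiff ℝ n f) : ContDiff ℝ (n + 2 : ℕ) (Sn N f) := by
  have h : ContDiff ℝ (n + 1 + 1 : ℕ) (Kn N (Kn N f)) := Kn_contDiff (n+1) (Kn_contDiff n hf)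
  unfold Sn
  exact (h.sub contDiff_const).sub (contDiff_const.mul (contDiff_id.sub contDiff_const))

lemma Sn_hasDerivAt {f : ℝ → ℝ} (hf : Continuous f) (r : ℝ) :
    HasDerivAt (Sn N f) (Mn N (Kn N f) r / 4 - Mn N (Kn N f) 1 / 4) r := by
  have h1 := Kn_hasDerivAt (N := N) (Kn_continuous (N := N) hf) r
  refine HasDerivAt.congr_deriv ((h1.sub_const (Kn N (Kn N f) 1)).sub
    (((hasDerivAt_id r).sub_const 1).const_mul (Mn N (Kn N f) 1 / 4))) ?_
  ring

lemma Mn_lt {D : ℝ → ℝ} (hD : Continuous D) (hm : StrictMonoOn D (Icc 0 1)) {r : ℝ} (hr : 0 ≤ r)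
    (hr1 : r < 1) : Mn N D r < Mn N D 1 := by
  rw [← sub_pos]
  unfold Mn Mw
  rw [← intervalIntegral.integral_sub (Continuous.intervalIntegrable (by fun_prop) _ _)
    (Continuous.intervalIntegrable (by fun_prop) _ _)]
  refine intervalIntegral.intervalIntegral_pos_of_pos_on (Continuous.intervalIntegrable (by fun_prop) _ _)
    ?_ one_pos
  intro σ hσ
  have h0 : 0 < σ ^ 2 := by have := hσ.1; positivity
  have h1 : σ ^ 2 ≤ 1 := pow_le_one₀ hσ.1.le hσ.2.le
  have : D (r * σ ^ 2) < D (1 * σ ^ 2) := by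
    apply hm
    · constructor <;> nlinarith
    · constructor <;> nlinarith
    · nlinarith
  have h2 : 0 < σ ^ (N-1) := pow_pos hσ.1 _
  nlinarith

lemma Kn_strictMono {f : ℝ → ℝ} (hf : Continuous f) (hp : ∀ r ∈ Icc (0:ℝ) 1, 0 < f r) :
    StrictMonoOn (Kn N f) (Icc 0 1) := by
  refine strictMonoOn_of_deriv_pos (convex_Icc 0 1) (Kn_continuous hf).continuousOn ?_
  intro r hr
  rw [interior_Icc] at hr
  rw [(Kn_hasDerivAt hf r).deriv]
  have : 0 < Mn N f r := by
    unfold Mn Mw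
    refine intervalIntegral.intervalIntegral_pos_of_pos_on (Continuous.intervalIntegrable (by fun_prop) _ _)
      ?_ one_pos
    intro σ hσ
    have h0 : 0 < σ ^ 2 := by have := hσ.1; positivity
    have h1 : σ ^ 2 ≤ 1 := pow_le_one₀ hσ.1.le hσ.2.le
    have h2 : 0 < σ ^ (N-1) := pow_pos hσ.1 _
    have : 0 < f (r * σ ^ 2) := hp _ (by have := hr.1; have := hr.2; constructor <;> nlinarith)
    positivity
  linarith

lemma uniqueDiff_cb (x : EuclideanSpace ℝ (Fin N)) (hx : ‖x‖ = 1) :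
    UniqueDiffWithinAt ℝ (closedBall (0 : EuclideanSpace ℝ (Fin N)) 1) x := by
  have hc : Convex ℝ (closedBall (0 : EuclideanSpace ℝ (Fin N)) 1) := convex_closedBall _ _
  refine uniqueDiffOn_convex hc ?_ x (by simp [hx])
  rw [interior_closedBall _ one_ne_zero]
  exact ⟨0, by simp⟩

lemma solSet_nonempty (hN : 1 ≤ N) : (solSet N).Nonempty := by
  obtain ⟨ε, hε, hε2, f, hfc, hf⟩ := exists_fixed (N := N)
  have hgen : ∀ n : ℕ, n ≤ 4 → ContDiff ℝ n (Sn N f) → ContDiff ℝ n f := by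
    intro n hn h
    have e : f = fun r => chi r * gg (ε * Sn N f r) := funext hf
    rw [e]
    have h1 : ContDiff ℝ n (chi : ℝ → ℝ) := chi.contDiff
    have h2 : ContDiff ℝ n gg := gg_contDiff.of_le (by exact_mod_cast hn)
    exact h1.mul (h2.comp (contDiff_const.mul h))
  have hf2 : ContDiff ℝ (2:ℕ) f :=
    hgen 2 (by norm_num) (Sn_contDiff 0 (contDiff_zero.2 hfc))
  have hS4 : ContDiff ℝ (4:ℕ) (Sn N f) := Sn_contDiff 2 hf2
  have hf1 : ContDiff ℝ 1 f := hf2.of_le (by norm_num)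
  have hfb : ∀ r, |r| ≤ 3 → |f r| ≤ 4 := by
    intro r _
    rw [hf, abs_of_nonneg (mul_nonneg chi.nonneg (gg_pos _).le)]
    have := gg_le (ε * Sn N f r)
    have := (gg_pos (ε * Sn N f r)).le
    have := chi.le_one (x := r)
    have := chi.nonneg (x := r)
    nlinarith
  have hUb : ∀ r, |r| ≤ 3 → |ε * Sn N f r| ≤ 1 / 4 := by
    intro r hr
    have := Sn_bound (N := N) hfb r hr
    rw [abs_mul, abs_of_pos hε]
    nlinarith
  have hfeq : ∀ r ∈ Icc (0:ℝ) 1, f r = ((1 - ε * Sn N f r) ^ 2)⁻¹ := by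
    intro r hr
    have : chi r = 1 := chi.one_of_mem_closedBall (by
      simp [chi, abs_of_nonneg hr.1]; linarith [hr.2])
    rw [hf, this, one_mul]
    exact gg_eq (hUb r (by rw [abs_of_nonneg hr.1]; linarith [hr.2]))
  have hlt : ∀ r, |r| ≤ 3 → ε * Sn N f r < 1 := fun r hr => by
    have := (abs_le.1 (hUb r hr)).2
    linarith
  have hfpos : ∀ r ∈ Icc (0:ℝ) 1, 0 < f r := by
    intro r hr
    rw [hfeq r hr]
    have := hlt r (by rw [abs_of_nonneg hr.1]; linarith [hr.2])
    have : 0 < 1 - ε * Sn N f r := by linarith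
    positivity
  have hK := Kn_strictMono (N := N) hfc hfpos
  have hKc := Kn_continuous (N := N) hfc
  have hanti : StrictAntiOn (Sn N f) (Icc 0 1) := by
    refine strictAntiOn_of_deriv_neg (convex_Icc 0 1) hS4.continuous.continuousOn ?_
    intro r hr
    rw [interior_Icc] at hr
    rw [(Sn_hasDerivAt hfc r).deriv]
    have := Mn_lt (N := N) hKc hK hr.1.le hr.2
    linarith
  have hS1 : Sn N f 1 = 0 := by simp [Sn]
  have hns : ContDiff ℝ 4 (fun x : EuclideanSpace ℝ (Fin N) => ‖x‖ ^ 2) := contDiff_norm_sq ℝ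
  have hu4 : ContDiff ℝ 4 (fun x : EuclideanSpace ℝ (Fin N) => ε * Sn N f (‖x‖ ^ 2)) :=
    contDiff_const.mul (hS4.comp hns)
  have hK1 : ContDiff ℝ 1 (Kn N f) := by
    have := Kn_contDiff (N := N) 0 (contDiff_zero.2 hfc)
    simpa using this
  have hMd : ∀ {D : ℝ → ℝ}, ContDiff ℝ 1 D → ∀ r, HasDerivAt (Mn N D) (deriv (Mn N D) r) r :=
    fun hD r => (Mw_hasDerivAt (by fun_prop) hD r).differentiableAt.hasDerivAt
  have hlap1 : lap (fun x : EuclideanSpace ℝ (Fin N) => ε * Sn N f (‖x‖ ^ 2)) =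
      fun x => ε * Kn N f (‖x‖ ^ 2) - ε * N * Mn N (Kn N f) 1 / 2 := by
    funext x
    have := lap_radial (x := x) (F := fun r => ε * Sn N f r)
      (F1 := fun r => ε * (Mn N (Kn N f) r / 4 - Mn N (Kn N f) 1 / 4))
      (Eventually.of_forall fun s => (Sn_hasDerivAt hfc s).const_mul ε)
      ((((hMd hK1 (‖x‖ ^ 2)).div_const 4).sub_const _).const_mul ε)
    rw [this]
    have h2 := Mn_eq hN hK1 (‖x‖ ^ 2)
    rw [← h2]
    ring
  have hlap2 : ∀ x : EuclideanSpace ℝ (Fin N),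
      biharm (fun x : EuclideanSpace ℝ (Fin N) => ε * Sn N f (‖x‖ ^ 2)) x = ε * f (‖x‖ ^ 2) := by
    intro x
    unfold biharm
    rw [hlap1]
    have := lap_radial (x := x) (F := fun r => ε * Kn N f r - ε * N * Mn N (Kn N f) 1 / 2)
      (F1 := fun r => ε * (Mn N f r / 4))
      (Eventually.of_forall fun s => ((Kn_hasDerivAt hfc s).const_mul ε).sub_const _)
      (((hMd hf1 (‖x‖ ^ 2)).div_const 4).const_mul ε)
    rw [this]
    have h2 := Mn_eq hN hf1 (‖x‖ ^ 2)
    rw [← h2]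
    ring
  have hb : ∀ x ∈ ball (0 : EuclideanSpace ℝ (Fin N)) 1, ‖x‖ ^ 2 ∈ Ico (0:ℝ) 1 := by
    intro x hx
    have h1 : ‖x‖ < 1 := by simpa using hx
    have h0 := norm_nonneg x
    exact ⟨by positivity, by nlinarith⟩
  refine ⟨ε, hε, fun x => ε * Sn N f (‖x‖ ^ 2), hu4.contDiffOn, ?_, ?_, ?_, ?_, ?_⟩
  · intro x hx
    obtain ⟨h0, h1⟩ := hb x hx
    have := hanti ⟨h0, h1.le⟩ ⟨zero_le_one, le_refl _⟩ h1
    rw [hS1] at this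
    positivity
  · intro x hx
    obtain ⟨h0, h1⟩ := hb x hx
    exact hlt _ (by rw [abs_of_nonneg h0]; linarith)
  · intro x hx
    obtain ⟨h0, h1⟩ := hb x hx
    rw [hlap2, hfeq _ ⟨h0, h1.le⟩, div_eq_mul_inv]
  · intro x hx
    simp [hx, hS1]
  · intro x hx
    have hfd : HasFDerivAt (fun x : EuclideanSpace ℝ (Fin N) => ε * Sn N f (‖x‖ ^ 2)) (0 : EuclideanSpace ℝ (Fin N) →L[ℝ] ℝ) x := by
      have h1 := (Sn_hasDerivAt (N := N) hfc (‖x‖ ^ 2)).const_mul ε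
      have h2 := h1.comp_hasFDerivAt x (hasFDerivAt_normsq x)
      have h3 : ε * (Mn N (Kn N f) (‖x‖ ^ 2) / 4 - Mn N (Kn N f) 1 / 4) = 0 := by
        rw [hx]; norm_num
      exact HasFDerivAt.congr_fderiv h2 (by rw [h3]; exact zero_smul ℝ _)
    have hud := uniqueDiff_cb x hx
    rw [hfd.hasFDerivWithinAt.fderivWithin hud]
    simp

end exist

section radial
variable {N : ℕ}

lemma IsClassicalSolution.comp_isometry {lam : ℝ} {u : EuclideanSpace ℝ (Fin N) → ℝ}
    (h : IsClassicalSolution N lam u)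
    (R : EuclideanSpace ℝ (Fin N) ≃ₗᵢ[ℝ] EuclideanSpace ℝ (Fin N)) :
    IsClassicalSolution N lam (fun x => u (R x)) := by
  have hmap : MapsTo R (closedBall (0 : EuclideanSpace ℝ (Fin N)) 1) (closedBall 0 1) := by
    intro x hx; simpa using hx
  have hb : ∀ x ∈ ball (0 : EuclideanSpace ℝ (Fin N)) 1, R x ∈ ball (0 : EuclideanSpace ℝ (Fin N)) 1 := by
    intro x hx; simpa using hx
  have hRd : ContDiff ℝ 4 R := R.toContinuousLinearEquiv.contDiff
  refine ⟨h.contDiffOn.comp hRd.contDiffOn hmap, fun x hx => h.pos _ (hb x hx),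
    fun x hx => h.lt_one _ (hb x hx), ?_, fun x hx => h.bdry _ (by simpa using hx), ?_⟩
  · intro x hx
    rw [← h.eqn _ (hb x hx)]
    unfold biharm
    have e : lap (fun x => u (R x)) =ᶠ[nhds x] fun y => lap u (R y) := by
      filter_upwards [isOpen_ball.mem_nhds hx] with y hy
      exact lap_comp_isometry R ((h.contDiffAt (hb y hy)).of_le (by norm_num))
    rw [(lap_congr e).eq_of_nhds]
    exact lap_comp_isometry R (contDiffAt_lap (h.contDiffAt (hb x hx)) (by norm_num))
  · intro x hx
    have hx' : ‖R x‖ = 1 := by simpa using hx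
    have h1 : HasFDerivWithinAt u (fderivWithin ℝ u (closedBall 0 1) (R x)) (closedBall 0 1) (R x) :=
      (h.contDiffOn.differentiableOn (by norm_num) _ (by simp [hx])).hasFDerivWithinAt
    have h2 : HasFDerivWithinAt R (R.toContinuousLinearEquiv : EuclideanSpace ℝ (Fin N) →L[ℝ] EuclideanSpace ℝ (Fin N))
      (closedBall 0 1) x := R.toContinuousLinearEquiv.hasFDerivAt.hasFDerivWithinAt
    have h3 := h1.comp x h2 hmap
    have h4 : fderivWithin ℝ (fun x => u (R x)) (closedBall 0 1) x = _ :=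
      h3.fderivWithin (uniqueDiff_cb x hx)
    rw [h4]
    exact h.bdry_deriv _ hx'

lemma radial_of_minimal {lam : ℝ} {u : EuclideanSpace ℝ (Fin N) → ℝ}
    (h : IsClassicalSolution N lam u)
    (hmin : ∀ v, IsClassicalSolution N lam v →
          ∀ x ∈ ball (0 : EuclideanSpace ℝ (Fin N)) 1, u x ≤ v x)
    {x y : EuclideanSpace ℝ (Fin N)} (hx : x ∈ ball (0 : EuclideanSpace ℝ (Fin N)) 1)
    (hxy : ‖x‖ = ‖y‖) : u x = u y := by
  have key : ∀ x y : EuclideanSpace ℝ (Fin N), x ∈ ball (0 : EuclideanSpace ℝ (Fin N)) 1 → ‖x‖ = ‖y‖ → u x ≤ u y := by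
    intro x y hx hxy
    have := hmin _ (h.comp_isometry (Submodule.reflection (Submodule.span ℝ {x - y})ᗮ)) x hx
    rwa [Submodule.reflection_sub hxy] at this
  exact le_antisymm (key x y hx hxy) (key y x (by simpa [← hxy] using hx) hxy.symm)

end radial

section profile
variable {N : ℕ}

def RadialOn (v : EuclideanSpace ℝ (Fin N) → ℝ) : Prop :=
  ∀ x y : EuclideanSpace ℝ (Fin N), ‖x‖ < 1 → ‖x‖ = ‖y‖ → v x = v y

lemma RadialOn.lap {v : EuclideanSpace ℝ (Fin N) → ℝ} (hv : RadialOn v)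
    (hd : ∀ x, ‖x‖ < 1 → ContDiffAt ℝ 2 v x) : RadialOn (lap v) := by
  intro x y hx hxy
  have hy : ‖y‖ < 1 := hxy ▸ hx
  have hR := Submodule.reflection_sub hxy
  have h1 := lap_comp_isometry (x := x) (u := v)
    (Submodule.reflection (Submodule.span ℝ {x - y})ᗮ) (by rw [hR]; exact hd y hy)
  rw [hR] at h1
  rw [← h1]
  refine (lap_congr ?_).eq_of_nhds
  have : ∀ᶠ z in nhds x, ‖z‖ < 1 := continuous_norm.continuousAt.eventually_lt_const hx
  filter_upwards [this] with z hz
  exact hv _ _ hz (by simp)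

lemma norm_sqrt_smul {e : EuclideanSpace ℝ (Fin N)} (he : ‖e‖ = 1) (r : ℝ) : ‖Real.sqrt r • e‖ = Real.sqrt r := by
  rw [norm_smul, he, mul_one, Real.norm_eq_abs, abs_of_nonneg (Real.sqrt_nonneg r)]

lemma sqrt_lt_one_aux {r : ℝ} (hr : r < 1) : Real.sqrt r < 1 := by
  rw [Real.sqrt_lt' one_pos]; simpa using hr

noncomputable def prof (e : EuclideanSpace ℝ (Fin N)) (v : EuclideanSpace ℝ (Fin N) → ℝ) (r : ℝ) : ℝ :=
  v (Real.sqrt r • e)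

lemma prof_hasDerivAt {v : EuclideanSpace ℝ (Fin N) → ℝ} 
    (hd : ∀ x, ‖x‖ < 1 → ContDiffAt ℝ 2 v x) {e : EuclideanSpace ℝ (Fin N)} (he : ‖e‖ = 1)
    {r : ℝ} (hr : r ∈ Ioo (0:ℝ) 1) :
    HasDerivAt (prof e v) (fderiv ℝ v (Real.sqrt r • e) e * (1 / (2 * Real.sqrt r))) r := by
  have h1 : HasDerivAt (fun r => Real.sqrt r • e) ((1 / (2 * Real.sqrt r)) • e) r :=
    (Real.hasDerivAt_sqrt hr.1.ne').smul_const e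
  have h2 := ((hd (Real.sqrt r • e) (by rw [norm_sqrt_smul he]; exact sqrt_lt_one_aux hr.2)).differentiableAt
    (by norm_num)).hasFDerivAt
  refine HasDerivAt.congr_deriv (h2.comp_hasDerivAt r h1) ?_
  rw [map_smul, smul_eq_mul, mul_comm]

lemma prof_contDiffAt {v : EuclideanSpace ℝ (Fin N) → ℝ} 
    (hd : ∀ x, ‖x‖ < 1 → ContDiffAt ℝ 2 v x) {e : EuclideanSpace ℝ (Fin N)} (he : ‖e‖ = 1)
    {r : ℝ} (hr : r ∈ Ioo (0:ℝ) 1) : ContDiffAt ℝ 2 (prof e v) r := by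
  have h1 : ContDiffAt ℝ 2 (fun r => Real.sqrt r • e) r :=
    (Real.contDiffAt_sqrt hr.1.ne').smul contDiffAt_const
  exact ContDiffAt.comp r (hd (Real.sqrt r • e) (by rw [norm_sqrt_smul he]; exact sqrt_lt_one_aux hr.2)) h1

lemma prof_deriv2 {v : EuclideanSpace ℝ (Fin N) → ℝ} (hv : RadialOn v)
    (hd : ∀ x, ‖x‖ < 1 → ContDiffAt ℝ 2 v x) {e : EuclideanSpace ℝ (Fin N)} (he : ‖e‖ = 1)
    {r : ℝ} (hr : r ∈ Ioo (0:ℝ) 1) :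
    HasDerivAt (deriv (prof e v)) ((prof e (lap v) r - 2 * N * deriv (prof e v) r) / (4 * r)) r := by
  have hc := prof_contDiffAt hd he hr
  have h1 : ContDiffAt ℝ 1 (deriv (prof e v)) r := by
    have : ContDiffAt ℝ 1 (fun s => fderiv ℝ (prof e v) s 1) r :=
      ContDiffAt.clm_apply (hc.fderiv_right (by norm_num)) contDiffAt_const
    exact this
  have h2 := (h1.differentiableAt (by norm_num)).hasDerivAt
  refine HasDerivAt.congr_deriv h2 ?_
  have hn : ‖Real.sqrt r • e‖ ^ 2 = r := by
    rw [norm_sqrt_smul he, Real.sq_sqrt hr.1.le]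
  have h3 := lap_radial (x := Real.sqrt r • e) (F := prof e v) (F1 := deriv (prof e v))
    (F2 := deriv (deriv (prof e v)) r) (by
      rw [hn]
      filter_upwards [Ioo_mem_nhds hr.1 hr.2] with s hs
      exact (prof_hasDerivAt hd he hs).differentiableAt.hasDerivAt) (by rw [hn]; exact h2)
  rw [hn] at h3
  have h4 : lap (fun y => prof e v (‖y‖ ^ 2)) (Real.sqrt r • e) = prof e (lap v) r := by
    refine (lap_congr ?_).eq_of_nhds
    have : ∀ᶠ z in nhds (Real.sqrt r • e), ‖z‖ < 1 :=
      continuous_norm.continuousAt.eventually_lt_const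
        (by beta_reduce; rw [norm_sqrt_smul he]; exact sqrt_lt_one_aux hr.2)
    filter_upwards [this] with z hz
    refine (hv _ _ hz ?_).symm
    rw [norm_sqrt_smul he, Real.sqrt_sq (norm_nonneg z)]
  rw [h4] at h3
  have := hr.1
  rw [h3]
  field_simp
  ring

lemma prof_tendsto {v : EuclideanSpace ℝ (Fin N) → ℝ} 
    (hd : ContinuousAt v 0) (e : EuclideanSpace ℝ (Fin N)) :
    Tendsto (prof e v) (nhdsWithin 0 (Ioi 0)) (nhds (v 0)) := by
  have h1 : ContinuousAt (fun r : ℝ => Real.sqrt r • e) 0 := by fun_prop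
  have h2 : ContinuousAt v (Real.sqrt 0 • e) := by simpa using hd
  have h3 := (ContinuousAt.comp (x := (0:ℝ)) h2 h1).tendsto
  simp only [Function.comp_apply, Real.sqrt_zero, zero_smul] at h3
  exact h3.mono_left nhdsWithin_le_nhds

lemma prof_OZ {v : EuclideanSpace ℝ (Fin N) → ℝ} 
    (hd : ContinuousAt v 0) (e : EuclideanSpace ℝ (Fin N)) : OZ 0 (prof e v) := by
  have := (prof_tendsto hd e).isBigO_one ℝ
  unfold OZ
  simpa using this

lemma prof_deriv_OZ {v : EuclideanSpace ℝ (Fin N) → ℝ} 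
    (hd : ∀ x, ‖x‖ < 1 → ContDiffAt ℝ 2 v x) {e : EuclideanSpace ℝ (Fin N)} (he : ‖e‖ = 1) :
    OZ (-1/2) (deriv (prof e v)) := by
  have hc : ContDiffAt ℝ 1 (fun x => fderiv ℝ v x e) 0 :=
    ContDiffAt.clm_apply ((hd 0 (by simp)).fderiv_right (by norm_num)) contDiffAt_const
  have h1 := prof_OZ hc.continuousAt e
  have h2 : OZ (-1/2) (fun r => 1 / (2 * Real.sqrt r)) := by
    unfold OZ
    refine Asymptotics.IsBigO.of_bound 1 ?_
    filter_upwards [self_mem_nhdsWithin] with r hr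
    have hr : 0 < r := hr
    rw [show (-1/2:ℝ) = -(1/2) by norm_num, Real.rpow_neg hr.le, ← Real.sqrt_eq_rpow]
    have := Real.sqrt_pos.2 hr
    rw [Real.norm_of_nonneg (by positivity), Real.norm_of_nonneg (by positivity), one_mul, one_div]
    exact inv_anti₀ this (by linarith)
  have h3 := h1.mul h2
  unfold OZ at h3 ⊢
  rw [zero_add] at h3
  refine h3.congr' ?_ EventuallyEq.rfl
  filter_upwards [Ioo_mem_nhdsGT one_pos] with r hr
  exact (prof_hasDerivAt hd he hr).deriv.symm

lemma minimal_bound (hN : 9 ≤ N) {lam : ℝ} (hlam : 0 < lam) {u : EuclideanSpace ℝ (Fin N) → ℝ}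
    (h : IsClassicalSolution N lam u) (hrad : RadialOn u)
    {x : EuclideanSpace ℝ (Fin N)} (hx : ‖x‖ < 1) : u x ≤ 1 - ‖x‖ ^ ((4:ℝ)/3) := by
  have hb : ∀ y : EuclideanSpace ℝ (Fin N), ‖y‖ < 1 → y ∈ ball (0 : EuclideanSpace ℝ (Fin N)) 1 :=
    fun y hy => by simpa using hy
  by_cases hx0 : x = 0
  · subst hx0
    have := h.lt_one 0 (by simp)
    rw [norm_zero, Real.zero_rpow (by norm_num)]
    linarith
  let e : EuclideanSpace ℝ (Fin N) := EuclideanSpace.single (⟨0, by omega⟩ : Fin N) (1:ℝ)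
  have he : ‖e‖ = 1 := by simp [e]
  have hu2 : ∀ y, ‖y‖ < 1 → ContDiffAt ℝ 2 u y := fun y hy =>
    (h.contDiffAt (hb y hy)).of_le (by norm_num)
  have hl2 : ∀ y, ‖y‖ < 1 → ContDiffAt ℝ 2 (lap u) y := fun y hy =>
    contDiffAt_lap (h.contDiffAt (hb y hy)) (by norm_num)
  have hlrad := hrad.lap hu2
  have hball : ∀ r ∈ Ioo (0:ℝ) 1, Real.sqrt r • e ∈ ball (0 : EuclideanSpace ℝ (Fin N)) 1 :=
    fun r hr => hb _ (by rw [norm_sqrt_smul he]; exact sqrt_lt_one_aux hr.2)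
  have hS : RadSys (N:ℝ) (Ioo 0 1) (fun r => 1 - prof e u r) (fun r => -deriv (prof e u) r)
      (fun r => -prof e (lap u) r) (fun r => -deriv (prof e (lap u)) r)
      (fun r => -(lam / (1 - prof e u r) ^ 2)) := by
    constructor
    · intro r hr
      exact (prof_hasDerivAt hu2 he hr).differentiableAt.hasDerivAt.const_sub 1
    · intro r hr
      exact (prof_deriv2 hrad hu2 he hr).neg.congr_deriv (by ring)
    · intro r hr
      exact (prof_hasDerivAt hl2 he hr).differentiableAt.hasDerivAt.neg
    · intro r hr
      refine (prof_deriv2 hlrad hl2 he hr).neg.congr_deriv ?_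
      have h1 : prof e (lap (lap u)) r = lam / (1 - prof e u r) ^ 2 := h.eqn _ (hball r hr)
      rw [h1]
      ring
  have hF1 : 1 - prof e u 1 = 1 := by
    simp [prof, h.bdry e he]
  have hd1 : HasDerivWithinAt (fun r => 1 - prof e u r) 0 (Iic 1) 1 := by
    have h1 : HasDerivWithinAt (fun r => Real.sqrt r • e) ((1 / (2 * Real.sqrt 1)) • e) (Iic 1) 1 :=
      ((Real.hasDerivAt_sqrt one_ne_zero).smul_const e).hasDerivWithinAt
    have hmap : MapsTo (fun r => Real.sqrt r • e) (Iic 1) (closedBall (0 : EuclideanSpace ℝ (Fin N)) 1) := by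
      intro r hr
      rw [mem_closedBall_zero_iff, norm_sqrt_smul he]
      exact Real.sqrt_le_one.2 hr
    have h2 : HasFDerivWithinAt u (fderivWithin ℝ u (closedBall 0 1) (Real.sqrt 1 • e)) (closedBall 0 1)
        (Real.sqrt 1 • e) :=
      (h.contDiffOn.differentiableOn (by norm_num) _ (by simp [he])).hasFDerivWithinAt
    have h3 := h2.comp_hasDerivWithinAt 1 h1 hmap
    refine (h3.const_sub 1).congr_deriv ?_
    rw [map_smul]
    simp [h.bdry_deriv e he]
  have hmain := ode_main (M := N) (by exact_mod_cast hN) hlam hS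
    (fun r hr => by have := h.lt_one _ (hball r hr); simp only [prof]; linarith)
    (v0 := 1 - u 0) (by have := h.lt_one 0 (by simp); linarith)
    ((prof_tendsto (hu2 0 (by simp)).continuousAt e).const_sub 1)
    (prof_deriv_OZ hu2 he).neg_left (prof_OZ (hl2 0 (by simp)).continuousAt e).neg_left
    (prof_deriv_OZ hl2 he).neg_left hF1 hd1
  have hxp : 0 < ‖x‖ := norm_pos_iff.2 hx0
  have := hmain (‖x‖ ^ 2) ⟨by positivity, by nlinarith⟩
  have e1 : prof e u (‖x‖ ^ 2) = u x := by
    refine (hrad _ _ hx ?_).symm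
    rw [norm_sqrt_smul he, Real.sqrt_sq hxp.le]
  have e2 : (‖x‖ ^ 2) ^ ((2:ℝ)/3) = ‖x‖ ^ ((4:ℝ)/3) := by
    rw [← Real.rpow_natCast, ← Real.rpow_mul hxp.le]
    norm_num
  rw [e1, e2] at this
  linarith

end profile

/-- for N ≥ 9 the extremal solution satisfies u*(x) ≤ 1 - |x|^{4/3} on B. -/
theorem extremal_upper_bound_dim_ge_nine (N : ℕ) (hN : 9 ≤ N)
    (uMin : ℝ → EuclideanSpace ℝ (Fin N) → ℝ)
    (hMin : ∀ lam : ℝ, 0 < lam → lam < sSup (solSet N) →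
      IsClassicalSolution N lam (uMin lam) ∧
        ∀ v, IsClassicalSolution N lam v →
          ∀ x ∈ ball (0 : EuclideanSpace ℝ (Fin N)) 1, uMin lam x ≤ v x)
    (hMono : ∀ x ∈ ball (0 : EuclideanSpace ℝ (Fin N)) 1, ∀ l₁ l₂ : ℝ,
      0 < l₁ → l₁ ≤ l₂ → l₂ < sSup (solSet N) → uMin l₁ x ≤ uMin l₂ x)
    (uStar : EuclideanSpace ℝ (Fin N) → ℝ)
    (hStar : ∀ x ∈ ball (0 : EuclideanSpace ℝ (Fin N)) 1,
      Tendsto (fun lam => uMin lam x) (nhdsWithin (sSup (solSet N)) (Iio (sSup (solSet N))))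
        (nhds (uStar x)))
    :
    ∀ x ∈ ball (0 : EuclideanSpace ℝ (Fin N)) 1, uStar x ≤ 1 - ‖x‖ ^ ((4 : ℝ) / 3) := by
  have hbdd := solSet_bddAbove (N := N)
  obtain ⟨l0, hl0⟩ := solSet_nonempty (N := N) (by omega)
  have hpos : 0 < sSup (solSet N) := lt_of_lt_of_le hl0.1 (le_csSup hbdd hl0)
  intro x hx
  have hx1 : ‖x‖ < 1 := by simpa using hx
  refine le_of_tendsto (hStar x hx) ?_
  filter_upwards [Ioo_mem_nhdsLT hpos] with lam hlam
  obtain ⟨h, hm⟩ := hMin lam hlam.1 hlam.2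
  refine minimal_bound hN hlam.1 h ?_ hx1
  intro y z hy hyz
  exact radial_of_minimal h hm (by simpa using hy) hyz
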